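/- Fix N ≥ 1 and 1 ≤ n ≤ N. Suppose (s,x) ↦ R^{HSE,s}(x) is a jointly measurable function on (0,∞)×ℝⁿ such that for each s > 0, the function R^{HSE,s} is a density with respect to Lebesgue measure on ℝⁿ of the n-point correlation measure of a random matrix distributed according to ν_N^s. For x ∈ ℝⁿ define q_{N²}(v;x) = R^{HSE, 1/N + v√2/N²}(x)·√2·γ_{N²,1/N}(N + v√2) for v > −N/√2 and q_{N²}(v;x) = 0 otherwise. Then for Lebesgue-almost every x = (x₁,…,x_n) ∈ ℝⁿ and every p ∈ ℝ: ∫_ℝ e^{ipv}·q_{N²}(v;x) dv = φ_{N²}(p)·det( K̃_N(x_i, x_j, 1/((1−ip√2/N)·N)) )_{i,j=1}^n. -/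

import Mathlib

open MeasureTheory Real

noncomputable section

instance matrixMeasurableSpace (N : ℕ) : MeasurableSpace (Matrix (Fin N) (Fin N) ℂ) :=
  inferInstanceAs (MeasurableSpace (Fin N → Fin N → ℂ))

abbrev HermMat (N : ℕ) := selfAdjoint (Matrix (Fin N) (Fin N) ℂ)

lemma HermMat.isHermitian {N : ℕ} (A : HermMat N) :
    (A : Matrix (Fin N) (Fin N) ℂ).IsHermitian := A.2

def eig {N : ℕ} (A : HermMat N) : Fin N → ℝ := (HermMat.isHermitian A).eigenvalues

def trSq {N : ℕ} (A : HermMat N) : ℝ :=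
  (Matrix.trace ((A : Matrix (Fin N) (Fin N) ℂ) * (A : Matrix (Fin N) (Fin N) ℂ))).re

def corrMass (n : ℕ) {N : ℕ} (μ : Measure (HermMat N)) (B : Set (Fin n → ℝ)) : ℝ :=
  ∫ A, (Nat.card {σ : Fin n → Fin N //
      Function.Injective σ ∧ (fun i => eig A (σ i)) ∈ B} : ℝ) ∂μ

def OrthoInvariant {N : ℕ} (ν : Measure (HermMat N)) : Prop :=
  ∀ T : HermMat N ≃ₗ[ℝ] HermMat N,
    (∀ A B : HermMat N,
      (Matrix.trace ((T A : Matrix (Fin N) (Fin N) ℂ) * (T B : Matrix (Fin N) (Fin N) ℂ))).re =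
      (Matrix.trace ((A : Matrix (Fin N) (Fin N) ℂ) * (B : Matrix (Fin N) (Fin N) ℂ))).re) →
    Measure.map T ν = ν

def IsHSE {N : ℕ} (s : ℝ) (ν : Measure (HermMat N)) : Prop :=
  IsProbabilityMeasure ν ∧ ν {A : HermMat N | trSq A ≠ s * N ^ 2} = 0 ∧ OrthoInvariant ν

/-- The monic (probabilists') Hermite polynomial, evaluated at a complex number. -/
def hermiteH (k : ℕ) (z : ℂ) : ℂ := Polynomial.aeval z (Polynomial.hermite k)

/-- The normalized Hermite polynomial `p_k = H_k / ((2π)^{1/4} (k!)^{1/2})`. -/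
def hermiteP (k : ℕ) (z : ℂ) : ℂ :=
  hermiteH k z / (((2 * π) ^ ((1:ℝ)/4) * Real.sqrt (Nat.factorial k) : ℝ) : ℂ)

/-- The Hermite function `φ_k(z) = p_k(z) exp(−z²/4)`. -/
def hermitePhi (k : ℕ) (z : ℂ) : ℂ := hermiteP k z * Complex.exp (-(z ^ 2) / 4)

/-- The Hermite reproducing kernel `K_N`. -/
def kernelK (N : ℕ) (z₁ z₂ : ℂ) : ℂ :=
  ∑ k ∈ Finset.range N, hermitePhi k z₁ * hermitePhi k z₂

/-- The rescaled kernel `K̃_N(z₁,z₂,s) = s^{−1/2} K_N(z₁ s^{−1/2}, z₂ s^{−1/2})`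
(principal powers). -/
def kernelKt (N : ℕ) (z₁ z₂ s : ℂ) : ℂ :=
  s ^ (-(1:ℂ)/2) * kernelK N (z₁ * s ^ (-(1:ℂ)/2)) (z₂ * s ^ (-(1:ℂ)/2))

/-- The chi-square density with `m` degrees of freedom. -/
def chiSqPDF (m : ℕ) (u : ℝ) : ℝ :=
  if 0 < u then (2 ^ ((m : ℝ) / 2) * Real.Gamma ((m : ℝ) / 2))⁻¹ *
    u ^ ((m : ℝ) / 2 - 1) * Real.exp (-u / 2) else 0

/-- The rescaled chi-square density `γ_{m,s}(u) = s⁻¹ γ_m(u/s)`. -/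
def chiSqPDFscaled (m : ℕ) (s u : ℝ) : ℝ := s⁻¹ * chiSqPDF m (u / s)

/-- `φ_{N²}(p) = exp(−ipN/√2) (1 − ip√2/N)^{−N²/2}`, the characteristic function of the
normalized chi-square variable `(T − N²)/√(2N²)`. -/
def chiCharFun (N : ℕ) (p : ℝ) : ℂ :=
  Complex.exp (-Complex.I * p * N / Real.sqrt 2) *
    (1 - Complex.I * p * Real.sqrt 2 / N) ^ (-(N : ℂ) ^ 2 / 2)

/-!
The Gaussian unitary ensemble with density proportional to `exp (-tr A² / (2 s))` is orthogonally
invariant, and an orthogonally invariant law is determined by the law of its norm, so the ensemble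
is the chi-square mixture of the measures `ν_N^r`. Its correlation densities are
`det K̃_N(x_i, x_j, s)`: the power sums of the eigenvalues and the power sums of the variables under
the squared Vandermonde density satisfy the same loop equations, which determine all moments; the
remaining variables are integrated out by orthonormality of the Hermite functions, and the Gaussian
tail makes the moment problem determinate.

Multiplying a chi-square density by an exponential only changes its scale. Hence integrating
`q_{N²}(v; x)` against `exp (t v)` for real `t < N / √2` gives the correlation density of the
Gaussian unitary ensemble at `s = 1 / ((1 - t √2 / N) N)`, for almost every `x` and with a common
null set for all rational `t`. Both sides are analytic on the half-plane `re t < N / √2`, so they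
agree at `t = ip`.
-/

section GaussianExpectation

open ProbabilityTheory MvPolynomial

variable {ι : Type*}

/-- Evaluation at a real point of a polynomial with complex coefficients. -/
def evalReal (x : ι → ℝ) : MvPolynomial ι ℂ →ₐ[ℂ] ℂ := aeval fun i => (x i : ℂ)

lemma evalReal_X (x : ι → ℝ) (i : ι) : evalReal x (X i) = x i := aeval_X _ i

lemma evalReal_rename {κ : Type*} (f : ι → κ) (x : κ → ℝ) (P : MvPolynomial ι ℂ) :
    evalReal x (rename f P) = evalReal (x ∘ f) P :=
  aeval_rename _ _ P

lemma continuous_evalReal (P : MvPolynomial ι ℂ) : Continuous fun x => evalReal x P := by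
  induction P using MvPolynomial.induction_on with
  | C a => simpa only [evalReal, aeval_C] using continuous_const
  | add p q hp hq => simp only [map_add]; exact hp.add hq
  | mul_X p i hp => simp only [map_mul, evalReal_X]; fun_prop

lemma integrable_pow_abs_mul_exp_abs_gaussianReal (k : ℕ) (c : ℝ) :
    Integrable (fun x => |x| ^ k * exp (c * |x|)) (gaussianReal 0 1) := by
  have one_sided (d : ℝ) : Integrable (fun x => |x| ^ k * exp (d * x)) (gaussianReal 0 1) :=
    integrable_pow_abs_mul_exp_of_mem_interior_integrableExpSet (X := id)
      (by simp [integrableExpSet_id_gaussianReal]) k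
  refine ((one_sided c).add (one_sided (-c))).mono' (by fun_prop) (.of_forall fun x => ?_)
  rw [Real.norm_of_nonneg (by positivity), Pi.add_apply, ← mul_add]
  gcongr
  calc exp (c * |x|) ≤ exp |c * x| := by
        rw [abs_mul]; gcongr; exact le_abs_self c
    _ ≤ exp (c * x) + exp (-c * x) := by simpa using Real.exp_abs_le (c * x)

lemma integrable_gaussianPDFReal_mul_pow (k : ℕ) :
    Integrable fun x => gaussianPDFReal 0 1 x * x ^ k := by
  have h := integrable_pow_abs_mul_exp_abs_gaussianReal k 0
  rw [gaussianReal_of_var_ne_zero _ one_ne_zero, gaussianPDF_def,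
    integrable_withDensity_iff_integrable_smul₀' (by fun_prop) (by simp)] at h
  refine h.mono (by fun_prop) (.of_forall fun x => ?_)
  simp [ENNReal.toReal_ofReal (gaussianPDFReal_nonneg 0 1 _)]

lemma hasDerivAt_gaussianPDFReal_zero_one (x : ℝ) :
    HasDerivAt (gaussianPDFReal 0 1) (-x * gaussianPDFReal 0 1 x) x := by
  have exponent : HasDerivAt (fun y : ℝ => -(y - 0) ^ 2 / (2 * ((1 : NNReal) : ℝ))) (-x) x := by
    refine ((((hasDerivAt_id x).sub_const 0).pow 2).neg.div_const _).congr_deriv ?_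
    norm_num
    ring
  simp only [gaussianPDFReal_def]
  exact (exponent.exp.const_mul _).congr_deriv (by ring)

lemma integral_gaussianPDFReal_mul_pow_succ (k : ℕ) :
    ∫ x, gaussianPDFReal 0 1 x * x ^ (k + 1) = k * ∫ x, gaussianPDFReal 0 1 x * x ^ (k - 1) := by
  have by_parts := integral_mul_deriv_eq_deriv_mul_of_integrable
    (fun x _ => hasDerivAt_pow k x) (fun x _ => hasDerivAt_gaussianPDFReal_zero_one x)
    ((integrable_gaussianPDFReal_mul_pow (k + 1)).neg.congr
      (.of_forall fun x => by simp only [Pi.mul_apply, Pi.neg_apply]; ring))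
    (((integrable_gaussianPDFReal_mul_pow (k - 1)).const_mul (k : ℝ)).congr
      (.of_forall fun x => by simp only [Pi.mul_apply]; ring))
    ((integrable_gaussianPDFReal_mul_pow k).congr
      (.of_forall fun x => by simp only [Pi.mul_apply]; ring))
  calc ∫ x, gaussianPDFReal 0 1 x * x ^ (k + 1)
      = -∫ x, x ^ k * (-x * gaussianPDFReal 0 1 x) := by
        rw [← integral_neg]; congr 1; ext x; ring
    _ = k * ∫ x, gaussianPDFReal 0 1 x * x ^ (k - 1) := by
        rw [by_parts, neg_neg, ← integral_const_mul]; congr 1; ext x; ring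

lemma integral_pow_succ_gaussianReal (k : ℕ) :
    ∫ x : ℝ, (x : ℂ) ^ (k + 1) ∂gaussianReal 0 1 =
      k * ∫ x : ℝ, (x : ℂ) ^ (k - 1) ∂gaussianReal 0 1 := by
  have moment (j : ℕ) : ∫ x : ℝ, (x : ℂ) ^ j ∂gaussianReal 0 1 =
      ((∫ x, gaussianPDFReal 0 1 x * x ^ j : ℝ) : ℂ) := by
    rw [integral_gaussianReal_eq_integral_smul one_ne_zero, ← integral_complex_ofReal]
    simp
  rw [moment, moment, integral_gaussianPDFReal_mul_pow_succ]
  norm_cast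

variable [Fintype ι]

/-- The law of a family of independent standard real Gaussian variables. -/
abbrev gaussianPi (ι : Type*) [Fintype ι] : Measure (ι → ℝ) :=
  Measure.pi fun _ => gaussianReal 0 1

lemma integrable_evalReal_mul_exp_gaussianPi (P : MvPolynomial ι ℂ) (c : ℝ) :
    Integrable (fun x => evalReal x P * (exp (c * ∑ i, |x i|) : ℝ)) (gaussianPi ι) := by
  have dominating (m : ι →₀ ℕ) :
      Integrable (fun x : ι → ℝ => ∏ i, (|x i| ^ m i * exp (c * |x i|))) (gaussianPi ι) :=
    Integrable.fintype_prod (f := fun i x => |x| ^ m i * exp (c * |x|))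
      fun i => integrable_pow_abs_mul_exp_abs_gaussianReal (m i) c
  induction P using MvPolynomial.induction_on' with
  | add p q hp hq => simp only [map_add, add_mul]; exact hp.add hq
  | monomial m a =>
    refine ((dominating m).const_mul ‖a‖).mono' ?_ (.of_forall fun x => le_of_eq ?_)
    · have := continuous_evalReal (monomial m a)
      fun_prop
    · rw [norm_mul, Complex.norm_real, Real.norm_of_nonneg (exp_pos _).le, Finset.mul_sum,
        Real.exp_sum, evalReal, aeval_monomial, Finsupp.prod_fintype _ _ (by simp)]
      simp [Finset.prod_mul_distrib, norm_prod, mul_assoc]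

lemma integrable_evalReal_gaussianPi (P : MvPolynomial ι ℂ) :
    Integrable (fun x => evalReal x P) (gaussianPi ι) := by
  simpa using integrable_evalReal_mul_exp_gaussianPi P 0

/-- The expectation of a polynomial in independent standard Gaussian variables, as a linear
functional on the polynomial ring. -/
def gaussianExpectation (ι : Type*) [Fintype ι] : MvPolynomial ι ℂ →ₗ[ℂ] ℂ where
  toFun P := ∫ x, evalReal x P ∂gaussianPi ι
  map_add' P Q := by
    simpa only [map_add] using
      integral_add (integrable_evalReal_gaussianPi P) (integrable_evalReal_gaussianPi Q)
  map_smul' a P := by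
    simpa only [map_smul, smul_eq_mul, RingHom.id_apply] using integral_const_mul _ _

lemma gaussianExpectation_apply (P : MvPolynomial ι ℂ) :
    gaussianExpectation ι P = ∫ x, evalReal x P ∂gaussianPi ι := rfl

lemma gaussianExpectation_one : gaussianExpectation ι 1 = 1 := by
  simp [gaussianExpectation_apply]

lemma gaussianExpectation_monomial (m : ι →₀ ℕ) (a : ℂ) :
    gaussianExpectation ι (monomial m a) =
      a * ∏ i, ∫ x : ℝ, (x : ℂ) ^ m i ∂gaussianReal 0 1 := by
  rw [gaussianExpectation_apply,
    ← integral_fintype_prod_eq_prod (f := fun i (x : ℝ) => (x : ℂ) ^ m i), ← integral_const_mul]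
  congr 1 with x
  rw [evalReal, aeval_monomial, Finsupp.prod_fintype _ _ (by simp)]
  simp

lemma gaussianExpectation_X_mul (i : ι) (P : MvPolynomial ι ℂ) :
    gaussianExpectation ι (X i * P) = gaussianExpectation ι (pderiv i P) := by
  classical
  induction P using MvPolynomial.induction_on' with
  | add p q hp hq => simp only [mul_add, map_add, hp, hq]
  | monomial m a =>
    have other_factors : ∀ j ∈ Finset.univ.erase i,
        ∫ x : ℝ, (x : ℂ) ^ (Finsupp.single i 1 + m : ι →₀ ℕ) j ∂gaussianReal 0 1 =
          ∫ x : ℝ, (x : ℂ) ^ (m - Finsupp.single i 1 : ι →₀ ℕ) j ∂gaussianReal 0 1 := fun j hj => by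
      simp [(Finset.ne_of_mem_erase hj).symm]
    rw [X, monomial_mul, pderiv_monomial, gaussianExpectation_monomial,
      gaussianExpectation_monomial, ← Finset.mul_prod_erase _ _ (Finset.mem_univ i),
      ← Finset.mul_prod_erase (a := i) _ _ (Finset.mem_univ i),
      Finset.prod_congr rfl other_factors]
    simp only [Finsupp.add_apply, Finsupp.single_eq_same, Finsupp.tsub_apply, add_comm 1 (m i),
      integral_pow_succ_gaussianReal]
    ring

end GaussianExpectation

section LoopEquations

open MvPolynomial

variable {K : Type*} [CommRing K]

/-- The derivation `X m ↦ m X (k + m - 1)` of the polynomial ring in formal power sums `X m`: it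
is how the vector field `∑ i, x i ^ k ∂ i` acts on power sums. -/
def powerSumDerivation (K : Type*) [CommRing K] (k : ℕ) :
    Derivation K (MvPolynomial ℕ K) (MvPolynomial ℕ K) :=
  mkDerivation K fun m => (m : K) • X (k + m - 1)

/-- The loop (Schwinger–Dyson) equations of the `c × c` Gaussian unitary ensemble, for a linear
functional on polynomials in formal power sums. The variable `X 0` stands for the trace of the
identity. -/
structure SatisfiesLoopEquations (c : K) (M : MvPolynomial ℕ K →ₗ[K] K) : Prop where
  X_zero_mul : ∀ F, M (X 0 * F) = c * M F
  X_succ_mul : ∀ k F, M (X (k + 1) * F) =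
    M ((∑ l ∈ Finset.range k, X l * X (k - 1 - l)) * F + powerSumDerivation K k F)

/-- The grading of formal power sums by degree plus one, for which each loop equation expresses
a monomial through polynomials of smaller weight. -/
abbrev loopWeight : ℕ → ℕ := fun m => m + 1

lemma isWeightedHomogeneous_powerSumDerivation_monomial (k : ℕ) (m : ℕ →₀ ℕ) {d : ℕ}
    (hd : Finsupp.weight loopWeight m + k = d + 1) :
    IsWeightedHomogeneous loopWeight (powerSumDerivation K k (monomial m 1)) d := by
  rw [powerSumDerivation, mkDerivation_monomial, one_smul]
  refine IsWeightedHomogeneous.sum _ _ _ fun i hi => ?_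
  rcases Nat.eq_zero_or_pos i with rfl | hi_pos
  · simpa using isWeightedHomogeneous_zero K loopWeight d
  have weight_removed := Finsupp.weight_sub_single_add (w := loopWeight)
    (Finsupp.mem_support_iff.1 hi)
  have weight_replaced :
      Finsupp.weight loopWeight (m - Finsupp.single i 1) + loopWeight (k + i - 1) = d := by
    simp only [loopWeight] at weight_removed ⊢
    omega
  simp only [smul_eq_mul, smul_eq_C_mul, ← weight_replaced]
  exact (isWeightedHomogeneous_monomial loopWeight _ _ rfl).mul
    ((isWeightedHomogeneous_X K loopWeight _).C_mul _)

lemma map_eq_zero_of_isWeightedHomogeneous {M : MvPolynomial ℕ K →ₗ[K] K} {d : ℕ}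
    (hM : ∀ m : ℕ →₀ ℕ, Finsupp.weight loopWeight m = d → M (monomial m 1) = 0)
    {P : MvPolynomial ℕ K} (hP : IsWeightedHomogeneous loopWeight P d) : M P = 0 := by
  rw [P.as_sum, map_sum]
  refine Finset.sum_eq_zero fun m hm => ?_
  rw [← mul_one (P.coeff m), ← smul_eq_mul, ← smul_monomial, map_smul,
    hM m (hP (mem_support_iff.1 hm)), smul_zero]

lemma SatisfiesLoopEquations.map_monomial_eq_zero {c : K} {M : MvPolynomial ℕ K →ₗ[K] K}
    (hM : SatisfiesLoopEquations c M) (h_one : M 1 = 0) (m : ℕ →₀ ℕ) :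
    M (monomial m 1) = 0 := by
  induction hd : Finsupp.weight loopWeight m using Nat.strong_induction_on generalizing m with
  | _ d ih =>
  have lower {e : ℕ} (he : e < d) {P : MvPolynomial ℕ K}
      (hP : IsWeightedHomogeneous loopWeight P e) : M P = 0 :=
    map_eq_zero_of_isWeightedHomogeneous (fun m hm => ih e he m hm) hP
  by_cases hm : m = 0
  · simpa [hm] using h_one
  obtain ⟨i, hi⟩ := Finsupp.ne_iff.1 hm
  set m' := m - Finsupp.single i 1
  have weight_split : Finsupp.weight loopWeight m' + (i + 1) = d :=
    (Finsupp.weight_sub_single_add (w := loopWeight) hi).trans hd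
  have homogeneous_m' := isWeightedHomogeneous_monomial loopWeight m' (1 : K) rfl
  have monomial_split : monomial m (1 : K) = X i * monomial m' 1 := by
    rw [X, monomial_mul, one_mul, add_tsub_cancel_of_le
      (Finsupp.single_le_iff.2 (Nat.one_le_iff_ne_zero.2 hi))]
  rw [monomial_split]
  rcases i with - | k
  · rw [hM.X_zero_mul, lower (by omega) homogeneous_m', mul_zero]
  · rw [hM.X_succ_mul, map_add, Finset.sum_mul, map_sum, Finset.sum_eq_zero fun l hl => ?_,
      zero_add]
    · rcases Nat.eq_zero_or_pos (Finsupp.weight loopWeight m' + k) with h | h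
      · have : Finsupp.NonTorsionWeight ℕ loopWeight :=
          Finsupp.nonTorsionWeight_of ℕ loopWeight Nat.succ_ne_zero
        have m'_zero : m' = 0 := (Finsupp.weight_eq_zero_iff_eq_zero loopWeight).1 (by omega)
        simp [m'_zero]
      · exact lower (e := Finsupp.weight loopWeight m' + k - 1) (by omega)
          (isWeightedHomogeneous_powerSumDerivation_monomial k m' (by omega))
    · have := Finset.mem_range.1 hl
      exact lower (by simp only [loopWeight]; omega) (((isWeightedHomogeneous_X K loopWeight l).mul
        (isWeightedHomogeneous_X K loopWeight (k - 1 - l))).mul homogeneous_m')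

lemma SatisfiesLoopEquations.proportional {c : K} {M M' : MvPolynomial ℕ K →ₗ[K] K}
    (hM : SatisfiesLoopEquations c M) (hM' : SatisfiesLoopEquations c M')
    (F : MvPolynomial ℕ K) : M 1 * M' F = M' 1 * M F := by
  have difference : SatisfiesLoopEquations c (M 1 • M' - M' 1 • M) :=
    { X_zero_mul F := by
        simp only [LinearMap.sub_apply, LinearMap.smul_apply, hM.X_zero_mul, hM'.X_zero_mul,
          smul_eq_mul]
        ring
      X_succ_mul k F := by
        simp only [LinearMap.sub_apply, LinearMap.smul_apply, hM.X_succ_mul, hM'.X_succ_mul] }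
  have vanishes : M 1 • M' - M' 1 • M = 0 := by
    ext m
    exact difference.map_monomial_eq_zero (by simp [mul_comm]) m
  simpa [sub_eq_zero] using DFunLike.congr_fun vanishes F

lemma aeval_powerSumDerivation {S : Type*} [CommRing S] [Algebra K S] {T : ℕ → S} {k : ℕ}
    {D : Derivation K S S} (hD : ∀ m, D (T m) = (m : K) • T (k + m - 1)) (F : MvPolynomial ℕ K) :
    aeval T (powerSumDerivation K k F) = D (aeval T F) := by
  induction F using MvPolynomial.induction_on with
  | C a => simp only [derivation_C, map_zero, aeval_C, Derivation.map_algebraMap]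
  | add p q hp hq => simp only [map_add, hp, hq]
  | mul_X p i hp =>
    simp only [Derivation.leibniz, map_add, map_mul, smul_eq_mul, hp, aeval_X, hD]
    simp only [powerSumDerivation, mkDerivation_X, map_smul, aeval_X]

lemma SatisfiesLoopEquations.of_derivation {S : Type*} [CommRing S] [Algebra K S] {T : ℕ → S}
    {c : K} (T_zero : T 0 = algebraMap K S c) {D : ℕ → Derivation K S S}
    (hD : ∀ k m, D k (T m) = (m : K) • T (k + m - 1)) {Λ : S →ₗ[K] K}
    (hΛ : ∀ k f, Λ (T (k + 1) * f) =
      Λ ((∑ l ∈ Finset.range k, T l * T (k - 1 - l)) * f + D k f)) :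
    SatisfiesLoopEquations c (Λ ∘ₗ (aeval T).toLinearMap) where
  X_zero_mul F := by
    simp only [LinearMap.comp_apply, AlgHom.toLinearMap_apply, map_mul, aeval_X, T_zero,
      ← Algebra.smul_def, map_smul, smul_eq_mul]
  X_succ_mul k F := by
    simp only [LinearMap.comp_apply, AlgHom.toLinearMap_apply, map_mul, map_add, aeval_X, hΛ,
      aeval_powerSumDerivation (hD k), map_sum]

end LoopEquations

section MatrixDerivation

variable {R S : Type*} [CommRing R] [CommRing S] [Algebra R S]

lemma derivation_sum_apply {κ : Type*} (s : Finset κ) (D : κ → Derivation R S S) (f : S) :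
    (∑ i ∈ s, D i) f = ∑ i ∈ s, D i f := by
  rw [← Derivation.coeFnAddMonoidHom_apply, map_sum, Finset.sum_apply]
  rfl

lemma derivation_prod_of_eq_mul {κ : Type*} (D : Derivation R S S) (s : Finset κ) {f g : κ → S}
    (h : ∀ a ∈ s, D (f a) = f a * g a) :
    D (∏ a ∈ s, f a) = (∏ a ∈ s, f a) * ∑ a ∈ s, g a := by
  induction s using Finset.cons_induction with
  | empty => simp
  | cons a s ha ih =>
    rw [Finset.prod_cons, Finset.sum_cons, Derivation.leibniz,
      ih fun b hb => h b (Finset.mem_cons_of_mem hb), h a (Finset.mem_cons_self a s)]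
    simp only [smul_eq_mul]
    ring

variable {ι : Type*} [Fintype ι] (D : Derivation R S S)

lemma matrix_map_derivation_mul (A B : Matrix ι ι S) :
    (A * B).map D = A.map D * B + A * B.map D := by
  ext i j
  simp only [Matrix.map_apply, Matrix.mul_apply, Matrix.add_apply, map_sum, Derivation.leibniz,
    smul_eq_mul, ← Finset.sum_add_distrib]
  exact Finset.sum_congr rfl fun k _ => by ring

variable [DecidableEq ι]

lemma matrix_map_derivation_pow (A : Matrix ι ι S) (m : ℕ) :
    (A ^ m).map D = ∑ r ∈ Finset.range m, A ^ r * A.map D * A ^ (m - 1 - r) := by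
  induction m with
  | zero =>
    ext i j
    rcases eq_or_ne i j with rfl | hij <;> simp [*]
  | succ m ih =>
    rw [pow_succ, matrix_map_derivation_mul, ih, Finset.sum_range_succ, Finset.sum_mul]
    congr 1
    · refine Finset.sum_congr rfl fun r hr => ?_
      have := Finset.mem_range.1 hr
      rw [mul_assoc, ← pow_succ, show m - 1 - r + 1 = m + 1 - 1 - r by omega]
    · simp

lemma derivation_trace_pow (A : Matrix ι ι S) (m : ℕ) :
    D (A ^ m).trace = m * (A.map D * A ^ (m - 1)).trace := by
  have cyclic : ∀ r ∈ Finset.range m,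
      (A ^ r * A.map D * A ^ (m - 1 - r)).trace = (A.map D * A ^ (m - 1)).trace := fun r hr => by
    have := Finset.mem_range.1 hr
    rw [mul_assoc, Matrix.trace_mul_comm, mul_assoc, ← pow_add,
      show m - 1 - r + r = m - 1 by omega]
  calc D (A ^ m).trace = ((A ^ m).map D).trace := by simp [Matrix.trace, map_sum]
    _ = m * (A.map D * A ^ (m - 1)).trace := by
      rw [matrix_map_derivation_pow, Matrix.trace_sum, Finset.sum_congr rfl cyclic]
      simp

end MatrixDerivation

section MatrixLoopEquations

open ProbabilityTheory MvPolynomial ComplexConjugate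

/-- The coefficient for which `x ↦ hermCoeff * x i j + conj hermCoeff * x j i` is an isometry
from real square matrices to Hermitian matrices. -/
def hermCoeff : ℂ := (1 + Complex.I) / 2

lemma conj_hermCoeff : conj hermCoeff = (1 - Complex.I) / 2 := by
  simp only [hermCoeff, map_div₀, map_add, map_one, Complex.conj_I, map_ofNat, sub_eq_add_neg]

lemma hermCoeff_mul_conj : 2 * (hermCoeff * conj hermCoeff) = 1 := by
  rw [conj_hermCoeff, hermCoeff]
  linear_combination -(1 / 2 : ℂ) * Complex.I_sq

lemma hermCoeff_sq_add_conj_sq :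
    hermCoeff * hermCoeff + conj hermCoeff * conj hermCoeff = 0 := by
  rw [conj_hermCoeff, hermCoeff]
  linear_combination (1 / 2 : ℂ) * Complex.I_sq

variable {ι : Type*}

/-- The Hermitian matrix whose coordinates are independent indeterminates. -/
def genericHermitian (ι : Type*) : Matrix ι ι (MvPolynomial (ι × ι) ℂ) :=
  .of fun i j => hermCoeff • X (i, j) + conj hermCoeff • X (j, i)

/-- The partial derivative with respect to the entry `(j, i)` of `genericHermitian ι`. -/
def entryDerivation (i j : ι) :
    Derivation ℂ (MvPolynomial (ι × ι) ℂ) (MvPolynomial (ι × ι) ℂ) :=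
  hermCoeff • pderiv (i, j) + conj hermCoeff • pderiv (j, i)

lemma genericHermitian_map_entryDerivation [DecidableEq ι] (i j : ι) :
    (genericHermitian ι).map (entryDerivation i j) = Matrix.single j i 1 := by
  refine Matrix.ext fun k l => ?_
  have pderiv_pair (a b c d : ι) : pderiv (a, b) (X (c, d) : MvPolynomial (ι × ι) ℂ) =
      if a = c ∧ b = d then 1 else 0 := by
    rw [pderiv_X, Pi.single_apply]
    simp only [Prod.mk.injEq, eq_comm]
  simp only [entryDerivation, genericHermitian, Matrix.map_apply, Matrix.of_apply,
    Matrix.single_apply, map_add, Derivation.map_smul, Derivation.add_apply,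
    Derivation.smul_apply, pderiv_pair, and_comm (a := i = l), and_comm (a := i = k)]
  set p : MvPolynomial (ι × ι) ℂ := if j = l ∧ i = k then 1 else 0
  set q : MvPolynomial (ι × ι) ℂ := if j = k ∧ i = l then 1 else 0
  calc _ = (hermCoeff * hermCoeff + conj hermCoeff * conj hermCoeff) • p +
        (2 * (hermCoeff * conj hermCoeff)) • q := by module
    _ = q := by rw [hermCoeff_sq_add_conj_sq, hermCoeff_mul_conj, zero_smul, one_smul, zero_add]

variable [Fintype ι]

lemma gaussianExpectation_genericHermitian_mul (i j : ι) (f : MvPolynomial (ι × ι) ℂ) :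
    gaussianExpectation _ (genericHermitian ι i j * f) =
      gaussianExpectation _ (entryDerivation i j f) := by
  simp only [genericHermitian, entryDerivation, Matrix.of_apply, add_mul, smul_mul_assoc, map_add,
    map_smul, gaussianExpectation_X_mul, Derivation.add_apply, Derivation.smul_apply]

variable [DecidableEq ι]

/-- The trace of the `k`-th power of the generic Hermitian matrix. -/
def genericTrace (ι : Type*) [Fintype ι] [DecidableEq ι] (k : ℕ) : MvPolynomial (ι × ι) ℂ :=
  (genericHermitian ι ^ k).trace

/-- The vector field on Hermitian matrices whose value at `A` is `A ^ k`. -/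
def matrixPowDerivation (ι : Type*) [Fintype ι] [DecidableEq ι] (k : ℕ) :
    Derivation ℂ (MvPolynomial (ι × ι) ℂ) (MvPolynomial (ι × ι) ℂ) :=
  ∑ i, ∑ j, (genericHermitian ι ^ k) j i • entryDerivation i j

lemma matrixPowDerivation_apply (k : ℕ) (f : MvPolynomial (ι × ι) ℂ) :
    matrixPowDerivation ι k f =
      ∑ i, ∑ j, (genericHermitian ι ^ k) j i * entryDerivation i j f := by
  simp only [matrixPowDerivation, derivation_sum_apply, Derivation.smul_apply, smul_eq_mul]

lemma genericHermitian_map_matrixPowDerivation (k : ℕ) :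
    (genericHermitian ι).map (matrixPowDerivation ι k) = genericHermitian ι ^ k := by
  ext a b : 2
  have entry (i j : ι) : entryDerivation i j (genericHermitian ι a b) =
      Matrix.single j i (1 : MvPolynomial (ι × ι) ℂ) a b :=
    congrFun₂ (genericHermitian_map_entryDerivation i j) a b
  simp only [Matrix.map_apply, matrixPowDerivation_apply, entry, Matrix.single_apply, ite_and,
    mul_ite, mul_one, mul_zero, Finset.sum_ite_eq', Finset.mem_univ, if_true]

lemma matrixPowDerivation_genericTrace (k m : ℕ) :
    matrixPowDerivation ι k (genericTrace ι m) = (m : ℂ) • genericTrace ι (k + m - 1) := by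
  rw [genericTrace, derivation_trace_pow, genericHermitian_map_matrixPowDerivation, ← pow_add,
    smul_eq_C_mul, map_natCast]
  rcases m with - | m
  · simp
  · rfl

lemma sum_entryDerivation_genericHermitian_pow (k : ℕ) :
    ∑ i, ∑ j, entryDerivation i j ((genericHermitian ι ^ k) j i) =
      ∑ l ∈ Finset.range k, genericTrace ι l * genericTrace ι (k - 1 - l) := by
  have entry (i j : ι) : entryDerivation i j ((genericHermitian ι ^ k) j i) =
      ∑ l ∈ Finset.range k,
        (genericHermitian ι ^ l) j j * (genericHermitian ι ^ (k - 1 - l)) i i := by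
    have := congrFun₂ (matrix_map_derivation_pow (entryDerivation i j) (genericHermitian ι) k) j i
    rw [Matrix.map_apply, genericHermitian_map_entryDerivation, Matrix.sum_apply] at this
    rw [this]
    refine Finset.sum_congr rfl fun l _ => ?_
    simp [Matrix.mul_apply, Matrix.single_apply, ite_and]
  simp only [entry, genericTrace, Matrix.trace, Matrix.diag_apply, Finset.sum_mul_sum]
  rw [Finset.sum_comm, Finset.sum_congr rfl fun j _ => Finset.sum_comm, Finset.sum_comm]

lemma gaussianExpectation_genericTrace_succ_mul (k : ℕ) (f : MvPolynomial (ι × ι) ℂ) :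
    gaussianExpectation _ (genericTrace ι (k + 1) * f) =
      gaussianExpectation _ ((∑ l ∈ Finset.range k, genericTrace ι l * genericTrace ι (k - 1 - l)) *
        f + matrixPowDerivation ι k f) := by
  have expand : genericTrace ι (k + 1) * f =
      ∑ i, ∑ j, genericHermitian ι i j * ((genericHermitian ι ^ k) j i * f) := by
    simp only [genericTrace, Matrix.trace, Matrix.diag_apply, pow_succ' (genericHermitian ι),
      Matrix.mul_apply, Finset.sum_mul, mul_assoc]
  rw [expand, ← sum_entryDerivation_genericHermitian_pow, matrixPowDerivation_apply]
  simp only [map_sum, gaussianExpectation_genericHermitian_mul, Derivation.leibniz, map_add,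
    smul_eq_mul, Finset.sum_add_distrib, Finset.sum_mul]
  rw [add_comm]
  simp only [mul_comm f]

lemma satisfiesLoopEquations_genericTrace :
    SatisfiesLoopEquations (Fintype.card ι : ℂ)
      (gaussianExpectation (ι × ι) ∘ₗ (aeval (genericTrace ι)).toLinearMap) :=
  .of_derivation (by simp [genericTrace]) matrixPowDerivation_genericTrace
    gaussianExpectation_genericTrace_succ_mul

end MatrixLoopEquations

section EigenvalueLoopEquations

open MvPolynomial

lemma derivation_eq_sum_pderiv {R ι : Type*} [CommRing R] [Fintype ι]
    (D : Derivation R (MvPolynomial ι R) (MvPolynomial ι R)) (f : MvPolynomial ι R) :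
    D f = ∑ i, D (X i) * pderiv i f := by
  classical
  have : D = ∑ i, D (X i) • pderiv i := derivation_ext fun j => by
    simp [derivation_sum_apply, pderiv_X, Pi.single_apply]
  conv_lhs => rw [this]
  simp [derivation_sum_apply]

/-- The vector field `∑ i, x i ^ k ∂ i`. -/
def coordPowDerivation (ι : Type*) (k : ℕ) :
    Derivation ℂ (MvPolynomial ι ℂ) (MvPolynomial ι ℂ) :=
  mkDerivation ℂ fun i => X i ^ k

lemma coordPowDerivation_X {ι : Type*} (k : ℕ) (i : ι) :
    coordPowDerivation ι k (X i) = X i ^ k :=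
  mkDerivation_X ..

lemma coordPowDerivation_psum {ι : Type*} [Fintype ι] (k m : ℕ) :
    coordPowDerivation ι k (psum ι ℂ m) = (m : ℂ) • psum ι ℂ (k + m - 1) := by
  simp only [psum, map_sum, Finset.smul_sum, Derivation.leibniz_pow, coordPowDerivation_X]
  refine Finset.sum_congr rfl fun i _ => ?_
  rcases m with - | m
  · simp
  · rw [smul_eq_mul, ← pow_add, smul_eq_C_mul, map_natCast, nsmul_eq_mul, Nat.add_sub_cancel,
      add_comm m k, Nat.add_succ_sub_one]

variable {N : ℕ}

/-- The Vandermonde determinant in the coordinate indeterminates. -/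
def vandermondePoly (N : ℕ) : MvPolynomial (Fin N) ℂ := (Matrix.vandermonde X).det

/-- The divided difference `(X i ^ k - X j ^ k) / (X i - X j)`. -/
def powDividedDiff (k : ℕ) (i j : Fin N) : MvPolynomial (Fin N) ℂ :=
  ∑ l ∈ Finset.range k, X i ^ l * X j ^ (k - 1 - l)

lemma powDividedDiff_comm (k : ℕ) (i j : Fin N) : powDividedDiff k i j = powDividedDiff k j i := by
  rw [powDividedDiff, (Commute.all _ _).geom_sum₂_comm]
  rfl

lemma coordPowDerivation_vandermondePoly (k : ℕ) :
    coordPowDerivation _ k (vandermondePoly N) =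
      vandermondePoly N * ∑ i, ∑ j ∈ Finset.Ioi i, powDividedDiff k j i := by
  rw [vandermondePoly, Matrix.det_vandermonde]
  refine derivation_prod_of_eq_mul _ _ fun i _ => derivation_prod_of_eq_mul _ _ fun j _ => ?_
  rw [map_sub, coordPowDerivation_X, coordPowDerivation_X, mul_comm, powDividedDiff, geom_sum₂_mul]

lemma sum_psum_mul_psum (k : ℕ) :
    ∑ l ∈ Finset.range k, psum (Fin N) ℂ l * psum (Fin N) ℂ (k - 1 - l) =
      ∑ i, (k : MvPolynomial (Fin N) ℂ) * X i ^ (k - 1) +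
        2 * ∑ i, ∑ j ∈ Finset.Ioi i, powDividedDiff k j i := by
  have all_pairs : ∑ l ∈ Finset.range k, psum (Fin N) ℂ l * psum (Fin N) ℂ (k - 1 - l) =
      ∑ i, ∑ j, powDividedDiff k j i := by
    simp only [psum, powDividedDiff, Finset.sum_mul_sum]
    rw [Finset.sum_comm, Finset.sum_congr rfl fun i _ => Finset.sum_comm, Finset.sum_comm]
  have diagonal (i : Fin N) : powDividedDiff k i i = (k : MvPolynomial (Fin N) ℂ) * X i ^ (k - 1) :=
    geom_sum₂_self _ k
  have off_diagonal : ∑ i, ∑ j ∈ {i}ᶜ, powDividedDiff k j i =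
      2 * ∑ i : Fin N, ∑ j ∈ Finset.Ioi i, powDividedDiff k j i := by
    rw [← Finset.sum_sum_Ioi_add_eq_sum_sum_off_diag]
    simp only [powDividedDiff_comm k _ _, ← two_mul, Finset.mul_sum]
  rw [all_pairs, ← off_diagonal, ← Finset.sum_add_distrib]
  exact Finset.sum_congr rfl fun i _ => by
    rw [Fintype.sum_eq_add_sum_compl i, diagonal]

/-- The unnormalized expectation under the eigenvalue law of the Gaussian unitary ensemble, whose
density with respect to the Gaussian law is the squared Vandermonde determinant. -/
def eigenvalueExpectation (N : ℕ) : MvPolynomial (Fin N) ℂ →ₗ[ℂ] ℂ :=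
  gaussianExpectation (Fin N) ∘ₗ LinearMap.mulLeft ℂ (vandermondePoly N ^ 2)

lemma eigenvalueExpectation_apply (f : MvPolynomial (Fin N) ℂ) :
    eigenvalueExpectation N f = gaussianExpectation (Fin N) (vandermondePoly N ^ 2 * f) := rfl

lemma eigenvalueExpectation_psum_succ_mul (k : ℕ) (f : MvPolynomial (Fin N) ℂ) :
    eigenvalueExpectation N (psum (Fin N) ℂ (k + 1) * f) =
      eigenvalueExpectation N
        ((∑ l ∈ Finset.range k, psum (Fin N) ℂ l * psum (Fin N) ℂ (k - 1 - l)) * f +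
          coordPowDerivation _ k f) := by
  have expand : vandermondePoly N ^ 2 * (psum (Fin N) ℂ (k + 1) * f) =
      ∑ i, X i * (X i ^ k * (vandermondePoly N ^ 2 * f)) := by
    simp only [psum, Finset.sum_mul, Finset.mul_sum]
    exact Finset.sum_congr rfl fun i _ => by ring
  have leibniz (i : Fin N) (g : MvPolynomial (Fin N) ℂ) : pderiv i (X i ^ k * g) =
      (k : MvPolynomial (Fin N) ℂ) * X i ^ (k - 1) * g +
        coordPowDerivation _ k (X i) * pderiv i g := by
    rw [Derivation.leibniz, Derivation.leibniz_pow, pderiv_X_self, coordPowDerivation_X]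
    simp only [smul_eq_mul, nsmul_eq_mul, mul_one]
    ring
  simp only [eigenvalueExpectation_apply]
  rw [expand, map_sum, Finset.sum_congr rfl fun i _ => gaussianExpectation_X_mul i _, ← map_sum]
  simp only [leibniz, Finset.sum_add_distrib, ← derivation_eq_sum_pderiv]
  rw [← Finset.sum_mul, Derivation.leibniz, Derivation.leibniz_pow,
    coordPowDerivation_vandermondePoly, sum_psum_mul_psum]
  simp only [smul_eq_mul, nsmul_eq_mul]
  push_cast
  ring_nf

lemma satisfiesLoopEquations_psum :
    SatisfiesLoopEquations (N : ℂ)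
      (eigenvalueExpectation N ∘ₗ (aeval (psum (Fin N) ℂ)).toLinearMap) :=
  .of_derivation (by simp) coordPowDerivation_psum eigenvalueExpectation_psum_succ_mul

/-- Both sides satisfy the loop equations, which replaces the Weyl integration formula. -/
lemma eigenvalueExpectation_aeval_psum (F : MvPolynomial ℕ ℂ) :
    eigenvalueExpectation N (aeval (psum (Fin N) ℂ) F) =
      eigenvalueExpectation N 1 *
        gaussianExpectation _ (aeval (genericTrace (Fin N)) F) := by
  have matrix_side := satisfiesLoopEquations_genericTrace (ι := Fin N)
  rw [Fintype.card_fin] at matrix_side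
  simpa [gaussianExpectation_one] using matrix_side.proportional satisfiesLoopEquations_psum F

end EigenvalueLoopEquations

section EigenvalueMeasurability

open Filter Topology

variable {N : ℕ}

lemma trace_pow_eq_sum_eig_pow (A : HermMat N) (k : ℕ) :
    ((A : Matrix (Fin N) (Fin N) ℂ) ^ k).trace = ∑ i, (eig A i : ℂ) ^ k := by
  rw [(HermMat.isHermitian A).spectral_theorem, ← map_pow, Unitary.conjStarAlgAut_apply,
    Matrix.trace_mul_cycle]
  simp only [Unitary.coe_star_mul_self, one_mul, Matrix.diagonal_pow, Matrix.trace_diagonal]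
  rfl

lemma trSq_eq_sum_eig_sq (A : HermMat N) : trSq A = ∑ i, eig A i ^ 2 := by
  rw [trSq, ← pow_two, trace_pow_eq_sum_eig_pow]
  norm_cast

lemma eig_sq_le_trSq (A : HermMat N) (i : Fin N) : eig A i ^ 2 ≤ trSq A := by
  rw [trSq_eq_sum_eig_sq]
  exact Finset.single_le_sum (f := fun i => eig A i ^ 2) (fun i _ => sq_nonneg _)
    (Finset.mem_univ i)

lemma measurable_hermMat_apply (i j : Fin N) :
    Measurable fun A : HermMat N => (A : Matrix (Fin N) (Fin N) ℂ) i j :=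
  (measurable_pi_apply j).comp ((measurable_pi_apply (X := fun _ => Fin N → ℂ) i).comp
    measurable_subtype_coe)

lemma measurable_hermMat_pow_apply (k : ℕ) (i j : Fin N) :
    Measurable fun A : HermMat N => ((A : Matrix (Fin N) (Fin N) ℂ) ^ k) i j := by
  induction k generalizing j with
  | zero => simp only [pow_zero, measurable_const]
  | succ k ih =>
    simp only [pow_succ, Matrix.mul_apply]
    exact Finset.measurable_sum _ fun l _ => (ih l).mul (measurable_hermMat_apply l j)

lemma measurable_sum_eig_pow (k : ℕ) : Measurable fun A : HermMat N => ∑ i, eig A i ^ k := by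
  have sum_eq (A : HermMat N) :
      ∑ i, eig A i ^ k = (((A : Matrix (Fin N) (Fin N) ℂ) ^ k).trace).re := by
    rw [trace_pow_eq_sum_eig_pow]
    norm_cast
  simp only [sum_eq, Matrix.trace, Matrix.diag_apply]
  exact Complex.measurable_re.comp
    (Finset.measurable_sum _ fun i _ => measurable_hermMat_pow_apply k i i)

lemma measurable_sum_polynomial_eig (p : Polynomial ℝ) :
    Measurable fun A : HermMat N => ∑ i, p.eval (eig A i) := by
  simp only [Polynomial.eval_eq_sum_range]
  simp only [Finset.sum_comm (s := Finset.univ), ← Finset.mul_sum]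
  exact Finset.measurable_sum _ fun k _ => (measurable_sum_eig_pow k).const_mul _

lemma measurable_sum_continuous_eig {g : ℝ → ℝ} (hg : Continuous g) :
    Measurable fun A : HermMat N => ∑ i, g (eig A i) := by
  have weierstrass (m : ℕ) :
      ∃ p : Polynomial ℝ, ∀ x ∈ Set.Icc (-(m : ℝ)) m, |p.eval x - g x| < 1 / ((m : ℝ) + 1) :=
    exists_polynomial_near_of_continuousOn _ _ g hg.continuousOn _ (by positivity)
  choose p hp using weierstrass
  refine measurable_of_tendsto_metrizable (fun m => measurable_sum_polynomial_eig (p m))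
    (tendsto_pi_nhds.2 fun A => tendsto_finsetSum _ fun i _ =>
      tendsto_iff_dist_tendsto_zero.2 ?_)
  refine squeeze_zero' (.of_forall fun _ => dist_nonneg) ?_
    (tendsto_one_div_add_atTop_nhds_zero_nat (𝕜 := ℝ))
  filter_upwards [eventually_ge_atTop ⌈|eig A i|⌉₊] with m hm
  exact (hp m (eig A i) (abs_le.1 (Nat.ceil_le.1 hm))).le

lemma measurable_sum_indicator_Ici_eig (t : ℝ) :
    Measurable fun A : HermMat N => ∑ i, (Set.Ici t).indicator (fun _ => (1 : ℝ)) (eig A i) := by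
  have delta_pos (m : ℕ) : (0 : ℝ) < 1 / ((m : ℝ) + 1) := by positivity
  have approx := thickenedIndicator_tendsto_indicator_closure delta_pos
    (tendsto_one_div_add_atTop_nhds_zero_nat (𝕜 := ℝ)) (Set.Ici t)
  rw [closure_Ici, tendsto_pi_nhds] at approx
  refine measurable_of_tendsto_metrizable (fun m => measurable_sum_continuous_eig
      (NNReal.continuous_coe.comp (thickenedIndicator (delta_pos m) (Set.Ici t)).continuous))
    (tendsto_pi_nhds.2 fun A => tendsto_finsetSum _ fun i _ => ?_)
  have at_eig := (NNReal.continuous_coe.tendsto _).comp (approx (eig A i))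
  rwa [← Function.comp_apply (f := NNReal.toReal), ← Set.indicator_comp_of_zero rfl] at at_eig

lemma le_antitone_apply_iff_lt_card {m : ℕ} {f : Fin m → ℝ} (hf : Antitone f) (t : ℝ) (k : Fin m) :
    t ≤ f k ↔ (k : ℕ) < (Finset.univ.filter fun j => t ≤ f j).card := by
  constructor
  · intro h
    have initial : Finset.Iic k ⊆ Finset.univ.filter (fun j => t ≤ f j) := fun j hj => by
      simpa using h.trans (hf (Finset.mem_Iic.1 hj))
    exact Nat.lt_of_succ_le ((Fin.card_Iic k).symm.le.trans (Finset.card_le_card initial))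
  · contrapose!
    intro h
    have bounded : (Finset.univ.filter fun j => t ≤ f j) ⊆ Finset.Iio k := fun j hj => by
      by_contra hkj
      have := hf (not_lt.1 fun hlt => hkj (Finset.mem_Iio.2 hlt))
      exact absurd ((Finset.mem_filter.1 hj).2.trans this) (not_le.2 h)
    simpa using Finset.card_le_card bounded

lemma measurable_eig : Measurable (eig : HermMat N → Fin N → ℝ) := by
  refine measurable_pi_lambda _ fun i => measurable_of_Ici fun t => ?_
  set e : Fin (Fintype.card (Fin N)) ≃ Fin N := Fintype.equivOfCardEq (Fintype.card_fin _)
  have superlevel : (fun A : HermMat N => eig A i) ⁻¹' Set.Ici t =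
      {A | (e.symm i : ℝ) < ∑ i, (Set.Ici t).indicator (fun _ => (1 : ℝ)) (eig A i)} := by
    ext A
    have count : ∑ i, (Set.Ici t).indicator (fun _ => (1 : ℝ)) (eig A i) =
        (Finset.univ.filter fun k => t ≤ (HermMat.isHermitian A).eigenvalues₀ k).card := by
      rw [← Equiv.sum_comp e]
      simp [Set.indicator_apply, eig, Matrix.IsHermitian.eigenvalues, e]
    rw [Set.mem_ofPred_eq, count, Nat.cast_lt, ← le_antitone_apply_iff_lt_card
      (HermMat.isHermitian A).eigenvalues₀_antitone]
    rfl
  rw [superlevel]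
  exact measurableSet_lt measurable_const (measurable_sum_indicator_Ici_eig t)

end EigenvalueMeasurability

section HermitianCoordinates

open MvPolynomial ComplexConjugate

variable {N : ℕ}

lemma hermCoeff_re : hermCoeff.re = 1 / 2 := by simp [hermCoeff]

lemma hermCoeff_im : hermCoeff.im = 1 / 2 := by simp [hermCoeff]

/-- Coordinates on the Hermitian matrices that are orthonormal for the trace inner product. -/
def hermitianEquiv (N : ℕ) : EuclideanSpace ℝ (Fin N × Fin N) ≃ₗ[ℝ] HermMat N where
  toFun x := ⟨Matrix.of fun i j => hermCoeff * x (i, j) + conj hermCoeff * x (j, i), by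
    rw [selfAdjoint.mem_iff]
    ext i j
    simp [Matrix.star_apply, add_comm]⟩
  map_add' x y := by
    ext i j
    simp [mul_add]
    ring
  map_smul' a x := by
    ext i j
    simp
    ring
  invFun A := WithLp.toLp 2 fun p =>
    ((A : Matrix (Fin N) (Fin N) ℂ) p.1 p.2).re + ((A : Matrix (Fin N) (Fin N) ℂ) p.1 p.2).im
  left_inv x := by
    ext p
    simp [hermCoeff_re, hermCoeff_im]
    ring
  right_inv A := by
    ext i j
    have conj_symm : (A : Matrix (Fin N) (Fin N) ℂ) j i =
        conj ((A : Matrix (Fin N) (Fin N) ℂ) i j) :=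
      ((HermMat.isHermitian A).apply j i).symm
    apply Complex.ext <;> simp [conj_symm, hermCoeff_re, hermCoeff_im] <;> ring

lemma hermitianEquiv_apply (x : EuclideanSpace ℝ (Fin N × Fin N)) (i j : Fin N) :
    (hermitianEquiv N x : Matrix (Fin N) (Fin N) ℂ) i j =
      hermCoeff * x (i, j) + conj hermCoeff * x (j, i) := rfl

lemma re_trace_hermitianEquiv_mul (x y : EuclideanSpace ℝ (Fin N × Fin N)) :
    (Matrix.trace ((hermitianEquiv N x : Matrix (Fin N) (Fin N) ℂ) *
      (hermitianEquiv N y : Matrix (Fin N) (Fin N) ℂ))).re = inner ℝ x y := by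
  have entry (i j : Fin N) : ((hermitianEquiv N x : Matrix (Fin N) (Fin N) ℂ) i j *
      (hermitianEquiv N y : Matrix (Fin N) (Fin N) ℂ) j i).re =
        (x (i, j) * y (i, j) + x (j, i) * y (j, i)) / 2 := by
    simp [hermitianEquiv_apply, hermCoeff_re, hermCoeff_im]
    ring
  calc _ = ∑ i, ∑ j, (x (i, j) * y (i, j) + x (j, i) * y (j, i)) / 2 := by
        simp only [Matrix.trace, Matrix.diag_apply, Matrix.mul_apply, Complex.re_sum, entry]
    _ = ∑ i, ∑ j, x (i, j) * y (i, j) := by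
        simp only [add_div, Finset.sum_add_distrib]
        rw [Finset.sum_comm (f := fun i j => x (j, i) * y (j, i) / 2)]
        simp only [← Finset.sum_add_distrib, add_halves]
    _ = inner ℝ x y := by
        simp only [PiLp.inner_apply, Fintype.sum_prod_type, RCLike.inner_apply, conj_trivial,
          mul_comm]

lemma trSq_hermitianEquiv (x : EuclideanSpace ℝ (Fin N × Fin N)) :
    trSq (hermitianEquiv N x) = ‖x‖ ^ 2 := by
  rw [trSq, re_trace_hermitianEquiv_mul, real_inner_self_eq_norm_sq]

lemma measurable_hermitianEquiv : Measurable (hermitianEquiv N) := by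
  refine Measurable.subtype_mk (measurable_pi_lambda _ fun i => measurable_pi_lambda _ fun j => ?_)
  simp only [Matrix.of_apply]
  fun_prop

lemma measurable_hermitianEquiv_symm : Measurable (hermitianEquiv N).symm :=
  (WithLp.measurable_toLp 2 _).comp <| measurable_pi_lambda _ fun p =>
    (Complex.measurable_re.comp (measurable_hermMat_apply p.1 p.2)).add
      (Complex.measurable_im.comp (measurable_hermMat_apply p.1 p.2))

lemma evalReal_genericTrace (x : EuclideanSpace ℝ (Fin N × Fin N)) (k : ℕ) :
    evalReal x (genericTrace (Fin N) k) = ∑ i, (eig (hermitianEquiv N x) i : ℂ) ^ k := by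
  have specialize : (evalReal x).mapMatrix (genericHermitian (Fin N)) = hermitianEquiv N x := by
    ext i j
    simp [genericHermitian, hermitianEquiv_apply, evalReal_X]
  rw [← trace_pow_eq_sum_eig_pow, ← specialize, ← map_pow, genericTrace]
  simp [Matrix.trace, map_sum]

end HermitianCoordinates

section HermiteKernel

open MvPolynomial

lemma det_bordered {R : Type*} [CommRing R] {n : ℕ} (K : Matrix (Fin (n + 1)) (Fin (n + 1)) R) :
    K.det = K (Fin.last n) (Fin.last n) * (K.submatrix Fin.castSucc Fin.castSucc).det -
      ∑ i : Fin n, ∑ j : Fin n, K (Fin.last n) i.castSucc *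
        (K.submatrix Fin.castSucc Fin.castSucc).adjugate i j * K j.castSucc (Fin.last n) := by
  rcases n with - | n
  · simp
  have minor (i : Fin (n + 1)) :
      (-1) ^ (n + 1 + i : ℕ) * (K.submatrix Fin.castSucc i.castSucc.succAbove).det =
        -∑ j : Fin (n + 1), (K.submatrix Fin.castSucc Fin.castSucc).adjugate i j *
          K j.castSucc (Fin.last (n + 1)) := by
    rw [Matrix.det_succ_column _ (Fin.last n), Finset.mul_sum, ← Finset.sum_neg_distrib]
    refine Finset.sum_congr rfl fun j _ => ?_
    rw [Matrix.adjugate_fin_succ_eq_det_submatrix, Matrix.submatrix_submatrix,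
      Matrix.submatrix_submatrix]
    have columns :
        i.castSucc.succAbove ∘ (Fin.last n).succAbove = Fin.castSucc ∘ i.succAbove := by
      ext l
      simp
    have even : ((-1 : R)) ^ (2 * n) = 1 := Even.neg_one_pow (even_two_mul n)
    rw [columns]
    simp only [Matrix.submatrix_apply, Fin.succAbove_ne_last_last i.castSucc_lt_last.ne,
      Fin.val_last]
    linear_combination (-(-1) ^ (i + j : ℕ) * K j.castSucc (Fin.last (n + 1)) *
      (K.submatrix (Fin.castSucc ∘ j.succAbove) (Fin.castSucc ∘ i.succAbove)).det) * even
  rw [Matrix.det_succ_row _ (Fin.last (n + 1)), Fin.sum_univ_castSucc, add_comm, sub_eq_add_neg,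
    ← Finset.sum_neg_distrib]
  simp only [Fin.succAbove_last, Fin.val_last, Fin.val_castSucc]
  congr 1
  · simp
  · refine Finset.sum_congr rfl fun i _ => ?_
    rw [mul_right_comm, minor]
    rw [neg_mul, mul_comm, Finset.mul_sum]
    simp only [mul_assoc]

lemma gaussianExpectation_rename_perm {ι : Type*} [Fintype ι] (e : Equiv.Perm ι)
    (P : MvPolynomial ι ℂ) :
    gaussianExpectation ι (rename e P) = gaussianExpectation ι P := by
  induction P using MvPolynomial.induction_on' with
  | add p q hp hq => simp only [map_add, hp, hq]
  | monomial m a =>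
    rw [rename_monomial, gaussianExpectation_monomial, gaussianExpectation_monomial,
      ← Equiv.prod_comp e]
    simp only [Finsupp.mapDomain_apply e.injective]

lemma gaussianExpectation_rename_mul_rename_last {n : ℕ} (P : MvPolynomial (Fin n) ℂ)
    (Q : MvPolynomial Unit ℂ) :
    gaussianExpectation (Fin (n + 1)) (rename Fin.castSucc P * rename (fun _ => Fin.last n) Q) =
      gaussianExpectation (Fin n) P * gaussianExpectation Unit Q := by
  induction P using MvPolynomial.induction_on' with
  | add p q hp hq => simp only [map_add, add_mul, hp, hq]
  | monomial m a =>
    induction Q using MvPolynomial.induction_on' with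
    | add p q hp hq => simp only [map_add, mul_add, hp, hq]
    | monomial m' a' =>
      have exponent_castSucc (i : Fin n) : (m.mapDomain Fin.castSucc +
          m'.mapDomain (fun _ => Fin.last n)) i.castSucc = m i := by
        rw [Finsupp.add_apply, Finsupp.mapDomain_apply (Fin.castSucc_injective n),
          Finsupp.mapDomain_of_notMem_range _ _ (by simp), add_zero]
      have exponent_last : (m.mapDomain Fin.castSucc +
          m'.mapDomain (fun _ => Fin.last n)) (Fin.last n) = m' () := by
        rw [Finsupp.add_apply, Finsupp.mapDomain_of_notMem_range _ _ (by simp), zero_add]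
        exact Finsupp.mapDomain_apply (f := fun _ : Unit => Fin.last n) (fun _ _ _ => rfl) m' ()
      rw [rename_monomial, rename_monomial, monomial_mul, gaussianExpectation_monomial,
        gaussianExpectation_monomial, gaussianExpectation_monomial, Fin.prod_univ_castSucc]
      simp only [exponent_castSucc, exponent_last, Finset.univ_unique, PUnit.default_eq_unit,
        Finset.prod_singleton]
      ring

/-- The `k`-th Hermite polynomial in the `i`-th indeterminate. -/
def hermiteVar {ι : Type*} (k : ℕ) (i : ι) : MvPolynomial ι ℂ :=
  Polynomial.aeval (X i) (Polynomial.hermite k)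

section HermiteVar

variable {ι : Type*}

lemma hermiteVar_zero (i : ι) : hermiteVar 0 i = 1 := by simp [hermiteVar]

lemma rename_hermiteVar {κ : Type*} (f : ι → κ) (k : ℕ) (i : ι) :
    rename f (hermiteVar k i) = hermiteVar k (f i) := by
  rw [hermiteVar, hermiteVar, ← AlgHom.coe_restrictScalars' ℤ, ← Polynomial.aeval_algHom_apply]
  simp

lemma hermiteVar_succ (k : ℕ) (i : ι) :
    hermiteVar (k + 1) i = X i * hermiteVar k i - pderiv i (hermiteVar k i) := by
  have chain := ((pderiv i : Derivation ℂ (MvPolynomial ι ℂ) _).restrictScalars ℤ).map_aeval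
    (Polynomial.hermite k) (X i)
  rw [Derivation.restrictScalars_apply, Derivation.restrictScalars_apply, pderiv_X_self,
    smul_eq_mul, mul_one] at chain
  rw [hermiteVar, hermiteVar, chain, Polynomial.hermite_succ]
  simp

lemma pderiv_hermiteVar_succ (k : ℕ) (i : ι) :
    pderiv i (hermiteVar (k + 1) i) = ((k : ℂ) + 1) • hermiteVar k i := by
  induction k with
  | zero => simp [hermiteVar]
  | succ k ih =>
    calc pderiv i (hermiteVar (k + 1 + 1) i)
        = hermiteVar (k + 1) i +
            ((k : ℂ) + 1) • (X i * hermiteVar k i - pderiv i (hermiteVar k i)) := by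
          rw [hermiteVar_succ (k + 1), map_sub, Derivation.leibniz, ih, pderiv_X_self,
            Derivation.map_smul, smul_eq_mul, smul_eq_mul, mul_one, mul_smul_comm]
          module
      _ = ((k + 1 : ℕ) + 1 : ℂ) • hermiteVar (k + 1) i := by
          rw [← hermiteVar_succ]
          push_cast
          module

variable [Fintype ι]

lemma gaussianExpectation_hermiteVar_succ_mul (k : ℕ) (i : ι) (P : MvPolynomial ι ℂ) :
    gaussianExpectation ι (hermiteVar (k + 1) i * P) =
      gaussianExpectation ι (hermiteVar k i * pderiv i P) := by
  rw [hermiteVar_succ, sub_mul, map_sub, mul_assoc, gaussianExpectation_X_mul, Derivation.leibniz,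
    ← map_sub]
  congr 1
  simp only [smul_eq_mul]
  ring

lemma gaussianExpectation_hermiteVar_mul_hermiteVar (j k : ℕ) (i : ι) :
    gaussianExpectation ι (hermiteVar j i * hermiteVar k i) =
      if j = k then (k.factorial : ℂ) else 0 := by
  have orthogonal_one (k : ℕ) :
      gaussianExpectation ι (hermiteVar (k + 1) i * hermiteVar 0 i) = 0 := by
    rw [gaussianExpectation_hermiteVar_succ_mul, hermiteVar_zero]
    simp
  induction j generalizing k with
  | zero =>
    cases k with
    | zero => simp [hermiteVar_zero, gaussianExpectation_one]
    | succ k => rw [mul_comm, orthogonal_one, if_neg k.succ_ne_zero.symm]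
  | succ j ih =>
    cases k with
    | zero => rw [orthogonal_one, if_neg j.succ_ne_zero]
    | succ k =>
      rw [gaussianExpectation_hermiteVar_succ_mul, pderiv_hermiteVar_succ, mul_smul_comm, map_smul,
        ih]
      by_cases h : j = k <;> simp [h, Nat.factorial_succ]

end HermiteVar

/-- The polynomial part of the Hermite reproducing kernel, in the indeterminates `i` and `j`. -/
def hermiteKernelPoly (N : ℕ) {ι : Type*} (i j : ι) : MvPolynomial ι ℂ :=
  ∑ k ∈ Finset.range N, (k.factorial : ℂ)⁻¹ • (hermiteVar k i * hermiteVar k j)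

/-- The matrix of the kernel `hermiteKernelPoly N` at `n` points. -/
def hermiteKernelMatrix (N n : ℕ) : Matrix (Fin n) (Fin n) (MvPolynomial (Fin n) ℂ) :=
  .of fun i j => hermiteKernelPoly N i j

variable {N n : ℕ}

lemma rename_hermiteKernelPoly {ι κ : Type*} (f : ι → κ) (i j : ι) :
    rename f (hermiteKernelPoly N i j) = hermiteKernelPoly N (f i) (f j) := by
  simp only [hermiteKernelPoly, map_sum, map_smul, map_mul, rename_hermiteVar]

lemma hermiteKernelPoly_comm {ι : Type*} (i j : ι) :
    hermiteKernelPoly N i j = hermiteKernelPoly N j i := by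
  simp only [hermiteKernelPoly, mul_comm (hermiteVar _ i)]

lemma hermiteKernelMatrix_submatrix_castSucc :
    (hermiteKernelMatrix N (n + 1)).submatrix Fin.castSucc Fin.castSucc =
      (rename Fin.castSucc).mapMatrix (hermiteKernelMatrix N n) :=
  Matrix.ext fun i j => (rename_hermiteKernelPoly Fin.castSucc i j).symm

lemma gaussianExpectation_mul_hermiteKernelPoly_diag (P : MvPolynomial (Fin n) ℂ) :
    gaussianExpectation _
      (rename Fin.castSucc P * hermiteKernelPoly N (Fin.last n) (Fin.last n)) =
        N * gaussianExpectation _ P := by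
  have trace_eq : gaussianExpectation Unit (hermiteKernelPoly N () ()) = N := by
    have unit_norm (k : ℕ) : (k.factorial : ℂ)⁻¹ * k.factorial = 1 :=
      inv_mul_cancel₀ (Nat.cast_ne_zero.2 k.factorial_ne_zero)
    simp [hermiteKernelPoly, map_sum, gaussianExpectation_hermiteVar_mul_hermiteVar, unit_norm]
  rw [← rename_hermiteKernelPoly (fun _ : Unit => Fin.last n) () (),
    gaussianExpectation_rename_mul_rename_last, trace_eq, mul_comm]

lemma gaussianExpectation_mul_hermiteKernelPoly_mul (i j : Fin n) (P : MvPolynomial (Fin n) ℂ) :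
    gaussianExpectation _ (rename Fin.castSucc P *
      (hermiteKernelPoly N (Fin.last n) i.castSucc * hermiteKernelPoly N j.castSucc (Fin.last n))) =
        gaussianExpectation _ (P * hermiteKernelPoly N i j) := by
  have separate : rename Fin.castSucc P *
      (hermiteKernelPoly N (Fin.last n) i.castSucc * hermiteKernelPoly N j.castSucc (Fin.last n)) =
        ∑ k ∈ Finset.range N, ∑ l ∈ Finset.range N,
          ((k.factorial : ℂ)⁻¹ * (l.factorial : ℂ)⁻¹) •
            (rename Fin.castSucc (P * (hermiteVar k i * hermiteVar l j)) *
              rename (fun _ : Unit => Fin.last n) (hermiteVar k () * hermiteVar l ())) := by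
    rw [hermiteKernelPoly, hermiteKernelPoly, Finset.sum_mul_sum, Finset.mul_sum]
    refine Finset.sum_congr rfl fun k _ => ?_
    rw [Finset.mul_sum]
    refine Finset.sum_congr rfl fun l _ => ?_
    simp only [map_mul, rename_hermiteVar, smul_eq_C_mul]
    ring
  rw [separate, hermiteKernelPoly, Finset.mul_sum, map_sum]
  simp only [map_sum, map_smul, gaussianExpectation_rename_mul_rename_last,
    gaussianExpectation_hermiteVar_mul_hermiteVar]
  refine Finset.sum_congr rfl fun k hk => ?_
  have := Nat.cast_ne_zero (R := ℂ).2 k.factorial_ne_zero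
  rw [Finset.sum_eq_single_of_mem k hk fun l _ hl => by simp [hl.symm], if_pos rfl,
    mul_smul_comm, map_smul, smul_eq_mul, smul_eq_mul]
  field_simp

lemma gaussianExpectation_mul_det_hermiteKernelMatrix_succ (P : MvPolynomial (Fin n) ℂ) :
    gaussianExpectation _ (rename Fin.castSucc P * (hermiteKernelMatrix N (n + 1)).det) =
      ((N : ℂ) - n) * gaussianExpectation _ (P * (hermiteKernelMatrix N n).det) := by
  set K := hermiteKernelMatrix N n
  have diagonal_term : gaussianExpectation _ (rename Fin.castSucc P *
      (hermiteKernelPoly N (Fin.last n) (Fin.last n) * rename Fin.castSucc K.det)) =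
        N * gaussianExpectation _ (P * K.det) := by
    rw [mul_left_comm, mul_comm, ← map_mul, gaussianExpectation_mul_hermiteKernelPoly_diag]
  have cross_term (i j : Fin n) : gaussianExpectation _ (rename Fin.castSucc P *
      (hermiteKernelPoly N (Fin.last n) i.castSucc * rename Fin.castSucc (K.adjugate i j) *
        hermiteKernelPoly N j.castSucc (Fin.last n))) =
          gaussianExpectation _ (P * (K j i * K.adjugate i j)) := by
    rw [mul_right_comm, mul_comm _ (rename _ (K.adjugate i j)), ← mul_assoc, ← map_mul,
      gaussianExpectation_mul_hermiteKernelPoly_mul, hermiteKernelPoly_comm, mul_assoc,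
      mul_comm (K.adjugate i j)]
    rfl
  have adjugate_row (j : Fin n) : ∑ i, K j i * K.adjugate i j = K.det :=
    (Matrix.det_eq_sum_mul_adjugate_row K j).symm
  rw [det_bordered, hermiteKernelMatrix_submatrix_castSucc, ← AlgHom.map_det,
    ← AlgHom.map_adjugate, mul_sub, map_sub, sub_mul, ← diagonal_term]
  simp only [Finset.mul_sum, map_sum]
  congr 1
  refine (Finset.sum_congr rfl fun i _ => Finset.sum_congr rfl fun j _ => cross_term i j).trans ?_
  rw [Finset.sum_comm]
  simp only [← map_sum, ← Finset.mul_sum, adjugate_row, Finset.sum_const, mul_smul_comm,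
    map_nsmul]
  simp

lemma gaussianExpectation_mul_det_hermiteKernelMatrix_castLE (hn : n ≤ N)
    (P : MvPolynomial (Fin n) ℂ) :
    gaussianExpectation _ (rename (Fin.castLE hn) P * (hermiteKernelMatrix N N).det) =
      ((N - n).factorial : ℂ) * gaussianExpectation _ (P * (hermiteKernelMatrix N n).det) := by
  induction hn using Nat.decreasingInduction with
  | self => simp
  | of_succ k hk ih =>
    have := ih (rename Fin.castSucc P)
    rw [rename_rename, gaussianExpectation_mul_det_hermiteKernelMatrix_succ] at this
    rw [show Fin.castLE hk.le = Fin.castLE (Nat.succ_le_of_lt hk) ∘ Fin.castSucc from rfl, this,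
      ← mul_assoc]
    obtain ⟨d, rfl⟩ := Nat.exists_eq_add_of_lt hk
    rw [show k + d + 1 - (k + 1) = d by omega, show k + d + 1 - k = d + 1 by omega,
      Nat.factorial_succ]
    push_cast
    ring

end HermiteKernel

section EigenvalueCorrelations

open MvPolynomial

variable {N n : ℕ}

lemma det_hermiteVar_eq_vandermondePoly :
    (Matrix.of fun i k : Fin N => hermiteVar (k : ℕ) i).det = vandermondePoly N := by
  refine Eq.symm <| (Matrix.det_eval_matrixOfPolynomials_eq_det_vandermonde X
    (fun k : Fin N => (Polynomial.hermite k).map (algebraMap ℤ (MvPolynomial (Fin N) ℂ)))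
    (fun k => ?_) fun k => (Polynomial.hermite_monic _).map _).trans ?_
  · rw [(Polynomial.hermite_monic _).natDegree_map, Polynomial.natDegree_hermite]
  · simp only [Polynomial.eval_map_algebraMap]
    rfl

lemma det_hermiteKernelMatrix_self :
    (hermiteKernelMatrix N N).det =
      (∏ k : Fin N, ((k : ℕ).factorial : ℂ)⁻¹) • vandermondePoly N ^ 2 := by
  set A : Matrix (Fin N) (Fin N) (MvPolynomial (Fin N) ℂ) :=
    Matrix.of fun i k => hermiteVar (k : ℕ) i
  have factorization : hermiteKernelMatrix N N =
      A * Matrix.diagonal (fun k : Fin N => C ((k : ℕ).factorial : ℂ)⁻¹) * A.transpose := by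
    refine Matrix.ext fun i j => ?_
    rw [Matrix.mul_apply]
    simp only [Matrix.mul_diagonal, Matrix.transpose_apply, A, Matrix.of_apply, hermiteKernelMatrix,
      hermiteKernelPoly, Finset.sum_range, smul_eq_C_mul]
    exact Finset.sum_congr rfl fun k _ => by ring
  rw [factorization, Matrix.det_mul, Matrix.det_mul, Matrix.det_transpose, Matrix.det_diagonal,
    det_hermiteVar_eq_vandermondePoly, smul_eq_C_mul, map_prod]
  ring

lemma esymm_mem_range_aeval_psum {σ : Type*} [Fintype σ] (k : ℕ) :
    esymm σ ℂ k ∈ (aeval (R := ℂ) (psum σ ℂ)).range := by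
  have psum_mem (k : ℕ) : psum σ ℂ k ∈ (aeval (R := ℂ) (psum σ ℂ)).range :=
    ⟨X k, aeval_X _ k⟩
  induction k using Nat.strong_induction_on with
  | _ k ih =>
    rcases Nat.eq_zero_or_pos k with rfl | hk
    · exact esymm_zero σ ℂ ▸ one_mem _
    have newton : esymm σ ℂ k = (k : ℂ)⁻¹ • ((k : MvPolynomial σ ℂ) * esymm σ ℂ k) := by
      rw [← nsmul_eq_mul, ← Nat.cast_smul_eq_nsmul ℂ, smul_smul,
        inv_mul_cancel₀ (Nat.cast_ne_zero.2 hk.ne'), one_smul]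
    rw [newton, mul_esymm_eq_sum]
    have sign_mem (j : ℕ) : (-1) ^ j ∈ (aeval (R := ℂ) (psum σ ℂ)).range :=
      pow_mem (neg_mem (one_mem _)) _
    refine Subalgebra.smul_mem _ (mul_mem (sign_mem _) (sum_mem fun a ha => ?_)) _
    exact mul_mem (mul_mem (sign_mem _) (ih _ (Finset.mem_filter.1 ha).2)) (psum_mem _)

lemma exists_aeval_psum_eq_of_isSymmetric {S : MvPolynomial (Fin N) ℂ} (hS : S.IsSymmetric) :
    ∃ F : MvPolynomial ℕ ℂ, aeval (psum (Fin N) ℂ) F = S := by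
  obtain ⟨G, hG⟩ := esymmAlgHom_surjective (σ := Fin N) (R := ℂ) (n := N) (by simp) ⟨S, hS⟩
  have eq_aeval_esymm : aeval (fun i : Fin N => esymm (Fin N) ℂ (i + 1)) G = S := by
    rw [← esymmAlgHom_apply, hG]
  rw [← AlgHom.mem_range, ← eq_aeval_esymm]
  have := Subalgebra.mvPolynomial_aeval_coe (aeval (R := ℂ) (psum (Fin N) ℂ)).range
    (fun i : Fin N => ⟨_, esymm_mem_range_aeval_psum (i + 1)⟩) G
  exact this ▸ Subtype.property _

lemma rename_vandermondePoly_sq (e : Equiv.Perm (Fin N)) :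
    rename e (vandermondePoly N ^ 2) = vandermondePoly N ^ 2 := by
  have permuted_rows : (rename e).mapMatrix (Matrix.vandermonde X) =
      (Matrix.vandermonde (X : Fin N → MvPolynomial (Fin N) ℂ)).submatrix e id :=
    Matrix.ext fun i j => by simp [Matrix.vandermonde]
  have sign_sq : (e.sign : MvPolynomial (Fin N) ℂ) ^ 2 = 1 := by
    rw [← Int.cast_pow, ← Units.val_pow_eq_pow_val, Int.units_sq, Units.val_one, Int.cast_one]
  rw [map_pow, vandermondePoly, AlgHom.map_det, permuted_rows, Matrix.det_permute, mul_pow,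
    sign_sq, one_mul]

lemma eigenvalueExpectation_rename_perm (e : Equiv.Perm (Fin N)) (f : MvPolynomial (Fin N) ℂ) :
    eigenvalueExpectation N (rename e f) = eigenvalueExpectation N f := by
  rw [eigenvalueExpectation_apply, eigenvalueExpectation_apply,
    ← gaussianExpectation_rename_perm e (vandermondePoly N ^ 2 * f), map_mul (rename e),
    rename_vandermondePoly_sq]

lemma isSymmetric_sum_rename_embedding (P : MvPolynomial (Fin n) ℂ) :
    (∑ σ : Fin n ↪ Fin N, rename σ P).IsSymmetric := by
  intro e
  simp only [map_sum, rename_rename]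
  exact Fintype.sum_equiv ((Equiv.refl (Fin n)).embeddingCongr e) _ _ fun σ => rfl

lemma eigenvalueExpectation_rename_embedding (hn : n ≤ N) (σ : Fin n ↪ Fin N)
    (P : MvPolynomial (Fin n) ℂ) :
    eigenvalueExpectation N (rename σ P) =
      eigenvalueExpectation N (rename (Fin.castLE hn) P) := by
  obtain ⟨e, he⟩ :=
    (Equiv.Perm.isMultiplyPretransitive (Fin N) n).exists_smul_eq (Fin.castLEEmb hn) σ
  rw [← eigenvalueExpectation_rename_perm e (rename (Fin.castLE hn) P), rename_rename, ← he]
  rfl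

lemma prod_factorial_inv_mul_eigenvalueExpectation_castLE (hn : n ≤ N)
    (P : MvPolynomial (Fin n) ℂ) :
    (∏ k : Fin N, ((k : ℕ).factorial : ℂ)⁻¹) *
        eigenvalueExpectation N (rename (Fin.castLE hn) P) =
      ((N - n).factorial : ℂ) * gaussianExpectation _ (P * (hermiteKernelMatrix N n).det) := by
  rw [← gaussianExpectation_mul_det_hermiteKernelMatrix_castLE hn, det_hermiteKernelMatrix_self,
    mul_smul_comm, map_smul, eigenvalueExpectation_apply, smul_eq_mul,
    mul_comm (vandermondePoly N ^ 2)]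

lemma prod_factorial_inv_mul_eigenvalueExpectation_one :
    (∏ k : Fin N, ((k : ℕ).factorial : ℂ)⁻¹) * eigenvalueExpectation N 1 = N.factorial := by
  simpa [gaussianExpectation_one] using
    prod_factorial_inv_mul_eigenvalueExpectation_castLE N.zero_le 1

lemma eigenvalueExpectation_sum_rename_embedding (hn : n ≤ N) (P : MvPolynomial (Fin n) ℂ) :
    eigenvalueExpectation N (∑ σ : Fin n ↪ Fin N, rename σ P) =
      eigenvalueExpectation N 1 *
        gaussianExpectation _ (P * (hermiteKernelMatrix N n).det) := by
  have prod_ne_zero : ∏ k : Fin N, ((k : ℕ).factorial : ℂ)⁻¹ ≠ 0 :=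
    Finset.prod_ne_zero_iff.2 fun k _ => inv_ne_zero (Nat.cast_ne_zero.2 (Nat.factorial_ne_zero k))
  have card_mul : ((N.descFactorial n : ℕ) : ℂ) * (N - n).factorial = N.factorial := by
    rw [mul_comm, ← Nat.cast_mul, Nat.factorial_mul_descFactorial hn]
  apply mul_left_cancel₀ prod_ne_zero
  simp only [map_sum, eigenvalueExpectation_rename_embedding hn, Finset.sum_const,
    Finset.card_univ, Fintype.card_embedding_eq, Fintype.card_fin, nsmul_eq_mul]
  rw [mul_left_comm, prod_factorial_inv_mul_eigenvalueExpectation_castLE, ← mul_assoc, card_mul,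
    ← mul_assoc, prod_factorial_inv_mul_eigenvalueExpectation_one]

lemma eigenvalueExpectation_one_ne_zero : eigenvalueExpectation N 1 ≠ 0 := fun h =>
  Nat.cast_ne_zero (R := ℂ).2 N.factorial_ne_zero <| by
    rw [← prod_factorial_inv_mul_eigenvalueExpectation_one, h, mul_zero]

theorem integral_sum_evalReal_eig (hn : n ≤ N) (P : MvPolynomial (Fin n) ℂ) :
    ∫ x, ∑ σ : Fin n ↪ Fin N, evalReal (eig (hermitianEquiv N (WithLp.toLp 2 x)) ∘ σ) P
        ∂gaussianPi (Fin N × Fin N) =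
      gaussianExpectation _ (P * (hermiteKernelMatrix N n).det) := by
  obtain ⟨F, hF⟩ :=
    exists_aeval_psum_eq_of_isSymmetric (isSymmetric_sum_rename_embedding (N := N) P)
  have loop_equations := eigenvalueExpectation_aeval_psum (N := N) F
  rw [hF, eigenvalueExpectation_sum_rename_embedding hn] at loop_equations
  rw [mul_left_cancel₀ eigenvalueExpectation_one_ne_zero loop_equations,
    gaussianExpectation_apply]
  congr 1 with x
  have traces_eq : (evalReal x).comp (aeval (genericTrace (Fin N))) =
      (evalReal (eig (hermitianEquiv N (WithLp.toLp 2 x)))).comp (aeval (psum (Fin N) ℂ)) := by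
    refine algHom_ext fun k => ?_
    simpa [psum, evalReal_X] using evalReal_genericTrace (WithLp.toLp 2 x) k
  calc ∑ σ : Fin n ↪ Fin N, evalReal (eig (hermitianEquiv N (WithLp.toLp 2 x)) ∘ σ) P
      = evalReal (eig (hermitianEquiv N (WithLp.toLp 2 x))) (aeval (psum (Fin N) ℂ) F) := by
        simp only [hF, map_sum, evalReal_rename]
    _ = evalReal x (aeval (genericTrace (Fin N)) F) := (DFunLike.congr_fun traces_eq F).symm

end EigenvalueCorrelations

section MomentDeterminacy

open ProbabilityTheory

variable {E : Type*} [MeasurableSpace E] {μ ν : Measure E} {X : E → ℝ}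

lemma complexMGF_eq_tsum (hX : integrableExpSet X μ = Set.univ) (z : ℂ) :
    complexMGF X μ z = ∑' m : ℕ, (m.factorial : ℂ)⁻¹ * z ^ m * (∫ x, X x ^ m ∂μ : ℝ) := by
  have hentire : Differentiable ℂ (complexMGF X μ) := by
    have h := differentiableOn_complexMGF (X := X) (μ := μ)
    simpa only [hX, interior_univ, Set.mem_univ, Set.ofPred_true, differentiableOn_univ] using h
  rw [← Complex.taylorSeries_eq_of_entire' 0 z hentire]
  refine tsum_congr fun m => ?_
  rw [iteratedDeriv_complexMGF (by simp [hX])]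
  simp only [sub_zero, zero_mul, Complex.exp_zero, mul_one]
  rw [← integral_complex_ofReal]
  push_cast
  ring

lemma integrableExpSet_eq_univ [NormedAddCommGroup E] [NormedSpace ℝ E] [BorelSpace E]
    (hμ : ∀ c : ℝ, Integrable (fun x => exp (c * ‖x‖)) μ) (L : StrongDual ℝ E) :
    integrableExpSet L μ = Set.univ := by
  refine Set.eq_univ_of_forall fun t => (hμ (|t| * ‖L‖)).mono' ?_ (.of_forall fun x => ?_)
  · exact (by fun_prop : Continuous fun x => exp (t * L x)).aestronglyMeasurable
  · rw [norm_eq_abs, abs_exp, exp_le_exp, mul_assoc]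
    calc t * L x ≤ |t| * ‖L x‖ := (le_abs_self _).trans_eq (abs_mul _ _)
      _ ≤ |t| * (‖L‖ * ‖x‖) := by gcongr; exact L.le_opNorm x

theorem ext_of_integral_dual_pow_eq [NormedAddCommGroup E] [NormedSpace ℝ E] [CompleteSpace E]
    [SecondCountableTopology E] [BorelSpace E] [IsFiniteMeasure μ] [IsFiniteMeasure ν]
    (hμ : ∀ c : ℝ, Integrable (fun x => exp (c * ‖x‖)) μ)
    (hν : ∀ c : ℝ, Integrable (fun x => exp (c * ‖x‖)) ν)
    (h : ∀ (L : StrongDual ℝ E) (m : ℕ), ∫ x, L x ^ m ∂μ = ∫ x, L x ^ m ∂ν) : μ = ν := by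
  refine Measure.ext_of_charFunDual (funext fun L => ?_)
  have hmgf : complexMGF L μ Complex.I = complexMGF L ν Complex.I := by
    rw [complexMGF_eq_tsum (integrableExpSet_eq_univ hμ L),
      complexMGF_eq_tsum (integrableExpSet_eq_univ hν L)]
    simp only [h L]
  simpa only [charFunDual_apply, complexMGF, mul_comm Complex.I] using hmgf

end MomentDeterminacy

section CorrelationMeasure

variable {N n : ℕ}

lemma eig_smul {c : ℝ} (hc : 0 ≤ c) (A : HermMat N) : eig (c • A) = c • eig A := by
  have hA := HermMat.isHermitian A
  have hcA := HermMat.isHermitian (c • A)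
  have charpoly_smul : (c • A : HermMat N).1.charpoly =
      ((Finset.univ.val.map fun i => ((c * hA.eigenvalues i : ℝ) : ℂ)).map
        fun a => Polynomial.X - Polynomial.C a).prod := by
    rw [Multiset.map_map]
    exact (congrArg _ (cfc_const_mul_id c A.1 A.2)).symm.trans (hA.charpoly_cfc_eq (c * ·))
  have roots_smul : (c • A : HermMat N).1.charpoly.roots.map RCLike.re =
      A.1.charpoly.roots.map fun z => c * RCLike.re z := by
    rw [charpoly_smul, Polynomial.roots_multiset_prod_X_sub_C, hA.roots_charpoly_eq_eigenvalues]
    simp [Function.comp_def]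
  have eigenvalues₀_smul : hcA.eigenvalues₀ = fun i => c * hA.eigenvalues₀ i := by
    rw [← List.ofFn_inj, ← hcA.sort_roots_charpoly_eq_eigenvalues₀, roots_smul,
      hA.roots_charpoly_eq_eigenvalues₀, Multiset.map_map, Fin.univ_val_map, Multiset.coe_sort]
    simp only [Function.comp_def, RCLike.ofReal_re]
    refine List.mergeSort_of_pairwise ?_
    simp_rw [decide_eq_true_eq, ← List.sortedGE_iff_pairwise]
    exact (hA.eigenvalues₀_antitone.const_mul hc).sortedGE_ofFn
  exact funext fun i => congrFun eigenvalues₀_smul _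

/-- The `n`-point correlation measure of a random Hermitian matrix with distribution `μ`: the
expected number of `n`-tuples of eigenvalues with distinct indices that lie in a given set. -/
def correlationMeasure (n : ℕ) (μ : Measure (HermMat N)) : Measure (Fin n → ℝ) :=
  ∑ σ : Fin n ↪ Fin N, μ.map fun A => eig A ∘ σ

lemma measurable_eig_comp (σ : Fin n ↪ Fin N) :
    Measurable fun A : HermMat N => eig A ∘ σ :=
  (measurable_pi_lambda _ fun i => measurable_pi_apply (σ i)).comp measurable_eig

lemma correlationMeasure_apply (μ : Measure (HermMat N)) {B : Set (Fin n → ℝ)}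
    (hB : MeasurableSet B) :
    correlationMeasure n μ B = ∑ σ : Fin n ↪ Fin N, μ {A | eig A ∘ σ ∈ B} := by
  simp only [correlationMeasure, Measure.coe_finsetSum, Finset.sum_apply,
    Measure.map_apply (measurable_eig_comp _) hB]
  rfl

instance (μ : Measure (HermMat N)) [IsFiniteMeasure μ] :
    IsFiniteMeasure (correlationMeasure n μ) := by
  unfold correlationMeasure
  infer_instance

lemma natCard_injective_eq_sum_indicator (A : HermMat N) (B : Set (Fin n → ℝ)) :
    (Nat.card {σ : Fin n → Fin N // Function.Injective σ ∧ (fun i => eig A (σ i)) ∈ B} : ℝ) =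
      ∑ σ : Fin n ↪ Fin N, {A | eig A ∘ σ ∈ B}.indicator (fun _ => 1) A := by
  classical
  have toEmbedding : {σ : Fin n → Fin N // Function.Injective σ ∧ (fun i => eig A (σ i)) ∈ B} ≃
      {σ : Fin n ↪ Fin N // eig A ∘ σ ∈ B} :=
    { toFun σ := ⟨⟨σ.1, σ.2.1⟩, σ.2.2⟩
      invFun σ := ⟨σ.1, σ.1.injective, σ.2⟩ }
  rw [Nat.card_congr toEmbedding, Nat.card_eq_fintype_card, Fintype.card_subtype,
    Finset.card_filter]
  simp [Set.indicator_apply]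

lemma corrMass_eq_real_correlationMeasure (μ : Measure (HermMat N)) [IsFiniteMeasure μ]
    {B : Set (Fin n → ℝ)} (hB : MeasurableSet B) :
    corrMass n μ B = (correlationMeasure n μ).real B := by
  have hmeas (σ : Fin n ↪ Fin N) : MeasurableSet {A : HermMat N | eig A ∘ σ ∈ B} :=
    measurable_eig_comp σ hB
  simp only [corrMass, natCard_injective_eq_sum_indicator]
  rw [integral_finsetSum _ fun σ _ =>
    (integrable_const (1 : ℝ)).indicator (hmeas σ), Measure.real, correlationMeasure_apply μ hB,
    ENNReal.toReal_sum fun σ _ => measure_ne_top _ _]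
  simp [integral_indicator (hmeas _), Measure.real]

lemma ofReal_corrMass (μ : Measure (HermMat N)) [IsFiniteMeasure μ] {B : Set (Fin n → ℝ)}
    (hB : MeasurableSet B) : ENNReal.ofReal (corrMass n μ B) = correlationMeasure n μ B := by
  rw [corrMass_eq_real_correlationMeasure μ hB, ofReal_measureReal]

lemma corrMass_univ_ne_zero (hn : n ≤ N) (μ : Measure (HermMat N)) [IsProbabilityMeasure μ] :
    corrMass n μ Set.univ ≠ 0 := by
  have card_pos : (0 : ℝ) < N.descFactorial n := by
    exact_mod_cast Nat.descFactorial_pos.2 hn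
  rw [corrMass_eq_real_correlationMeasure μ .univ, Measure.real,
    correlationMeasure_apply μ .univ]
  simpa using card_pos.ne'

end CorrelationMeasure

section HermiteKernelDeterminant

open MvPolynomial

variable {N n : ℕ}

/-- The determinant of the Hermite kernel at the points `x`, without the Gaussian weight. -/
def hermiteKernelDet (N : ℕ) {n : ℕ} (x : Fin n → ℝ) : ℝ :=
  Matrix.det <| Matrix.of fun i j => ∑ k ∈ Finset.range N, (k.factorial : ℝ)⁻¹ *
    (Polynomial.aeval (x i) (Polynomial.hermite k) * Polynomial.aeval (x j) (Polynomial.hermite k))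

lemma ofReal_aeval_hermite (k : ℕ) (x : ℝ) :
    ((Polynomial.aeval x (Polynomial.hermite k) : ℝ) : ℂ) =
      Polynomial.aeval (x : ℂ) (Polynomial.hermite k) := by
  have h := Polynomial.aeval_algHom_apply (Complex.ofRealAm.restrictScalars ℤ) x
    (Polynomial.hermite k)
  simpa using h.symm

lemma evalReal_hermiteVar {ι : Type*} (k : ℕ) (i : ι) (x : ι → ℝ) :
    evalReal x (hermiteVar k i) = (Polynomial.aeval (x i) (Polynomial.hermite k) : ℝ) := by
  rw [hermiteVar, ← AlgHom.coe_restrictScalars' ℤ, ← Polynomial.aeval_algHom_apply,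
    AlgHom.coe_restrictScalars', evalReal_X, ofReal_aeval_hermite]

lemma evalReal_det_hermiteKernelMatrix (x : Fin n → ℝ) :
    evalReal x (hermiteKernelMatrix N n).det = hermiteKernelDet N x := by
  rw [hermiteKernelDet, ← Complex.ofRealHom_eq_coe, RingHom.map_det, AlgHom.map_det]
  congr 1
  refine Matrix.ext fun i j => ?_
  simp [hermiteKernelMatrix, hermiteKernelPoly, evalReal_hermiteVar]

lemma continuous_hermiteKernelDet : Continuous (hermiteKernelDet N (n := n)) := by
  simpa only [evalReal_det_hermiteKernelMatrix, Complex.ofReal_re, Function.comp_def] using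
    Complex.continuous_re.comp (continuous_evalReal (hermiteKernelMatrix N n).det)

lemma hermiteKernelDet_nonneg (x : Fin n → ℝ) : 0 ≤ hermiteKernelDet N x := by
  let B : Matrix (Fin N) (Fin n) ℝ := .of fun k i =>
    (√((k : ℕ).factorial : ℝ))⁻¹ * Polynomial.aeval (x i) (Polynomial.hermite k)
  have gram : hermiteKernelDet N x = (B.conjTranspose * B).det := by
    rw [hermiteKernelDet]
    congr 1
    ext i j
    rw [Matrix.mul_apply, Matrix.of_apply, Finset.sum_range]
    refine Finset.sum_congr rfl fun k _ => ?_
    have sqrt_factorial : ((k : ℕ).factorial : ℝ)⁻¹ =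
        (√((k : ℕ).factorial : ℝ))⁻¹ * (√((k : ℕ).factorial : ℝ))⁻¹ := by
      rw [← mul_inv, mul_self_sqrt (by positivity)]
    simp only [B, Matrix.conjTranspose_apply, Matrix.of_apply, star_trivial, sqrt_factorial]
    ring
  exact gram ▸ (Matrix.posSemidef_conjTranspose_mul_self B).det_nonneg

lemma integrable_hermiteKernelDet_mul_exp (c : ℝ) :
    Integrable (fun x => hermiteKernelDet N x * exp (c * ∑ i, |x i|)) (gaussianPi (Fin n)) := by
  have h := (integrable_evalReal_mul_exp_gaussianPi (hermiteKernelMatrix N n).det c).re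
  simpa only [evalReal_det_hermiteKernelMatrix, ← Complex.ofReal_mul, RCLike.re_to_complex,
    Complex.ofReal_re] using h

end HermiteKernelDeterminant

section GaussianUnitaryEnsemble

open ProbabilityTheory MvPolynomial

variable {N n : ℕ}

/-- The Gaussian unitary ensemble whose density is proportional to `exp (-tr A² / (2 s))`. -/
def gue (N : ℕ) (s : ℝ) : Measure (HermMat N) :=
  (stdGaussian (EuclideanSpace ℝ (Fin N × Fin N))).map fun x => hermitianEquiv N (√s • x)

lemma measurable_hermitianEquiv_smul (c : ℝ) :
    Measurable fun x : EuclideanSpace ℝ (Fin N × Fin N) => hermitianEquiv N (c • x) :=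
  measurable_hermitianEquiv.comp (measurable_const_smul c)

instance (s : ℝ) : IsProbabilityMeasure (gue N s) :=
  Measure.isProbabilityMeasure_map (measurable_hermitianEquiv_smul _).aemeasurable

lemma gue_one : gue N 1 = (gaussianPi _).map fun x => hermitianEquiv N (WithLp.toLp 2 x) := by
  simp only [gue, sqrt_one, one_smul]
  rw [← map_pi_eq_stdGaussian, Measure.map_map measurable_hermitianEquiv (by fun_prop)]
  rfl

lemma correlationMeasure_gue (s : ℝ) :
    correlationMeasure n (gue N s) = (correlationMeasure n (gue N 1)).map (√s • ·) := by
  simp only [correlationMeasure, gue, sqrt_one, one_smul]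
  rw [Measure.map_finset_sum' (measurable_const_smul _).aemeasurable]
  refine Finset.sum_congr rfl fun σ _ => ?_
  rw [Measure.map_map (measurable_eig_comp σ) (measurable_hermitianEquiv_smul _),
    Measure.map_map (measurable_eig_comp σ) measurable_hermitianEquiv,
    Measure.map_map (measurable_const_smul _)
      ((measurable_eig_comp σ).comp measurable_hermitianEquiv)]
  congr 1 with x
  simp [eig_smul (sqrt_nonneg s)]

lemma norm_eig_comp_hermitianEquiv_le (x : Fin N × Fin N → ℝ) (σ : Fin n → Fin N) :
    ‖eig (hermitianEquiv N (WithLp.toLp 2 x)) ∘ σ‖ ≤ ∑ p, |x p| := by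
  have sum_nonneg : 0 ≤ ∑ p, |x p| := Finset.sum_nonneg fun p _ => abs_nonneg _
  refine (pi_norm_le_iff_of_nonneg sum_nonneg).2 fun i => abs_le_of_sq_le_sq ?_ sum_nonneg
  calc _ ≤ ‖WithLp.toLp 2 x‖ ^ 2 := (eig_sq_le_trSq _ _).trans_eq (trSq_hermitianEquiv _)
    _ = ∑ p, |x p| ^ 2 := by simp [EuclideanSpace.norm_sq_eq]
    _ ≤ (∑ p, |x p|) ^ 2 := Finset.sum_sq_le_sq_sum_of_nonneg fun p _ => abs_nonneg _

lemma measurable_eig_comp_hermitianEquiv (σ : Fin n ↪ Fin N) :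
    Measurable fun x => eig (hermitianEquiv N (WithLp.toLp 2 x)) ∘ σ :=
  (measurable_eig_comp σ).comp (measurable_hermitianEquiv.comp (WithLp.measurable_toLp 2 _))

lemma correlationMeasure_gue_one : correlationMeasure n (gue N 1) = ∑ σ : Fin n ↪ Fin N,
    (gaussianPi _).map fun x => eig (hermitianEquiv N (WithLp.toLp 2 x)) ∘ σ := by
  rw [correlationMeasure, gue_one]
  refine Finset.sum_congr rfl fun σ _ => ?_
  exact Measure.map_map (measurable_eig_comp σ)
    (measurable_hermitianEquiv.comp (WithLp.measurable_toLp 2 _))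

lemma integrable_exp_norm_correlationMeasure_gue_one (c : ℝ) :
    Integrable (fun y => exp (c * ‖y‖)) (correlationMeasure n (gue N 1)) := by
  rw [correlationMeasure_gue_one, integrable_finsetSum_measure]
  intro σ _
  rw [integrable_map_measure (by fun_prop) (measurable_eig_comp_hermitianEquiv σ).aemeasurable]
  have dominating := (integrable_evalReal_mul_exp_gaussianPi (ι := Fin N × Fin N) 1 |c|).norm
  refine dominating.mono' ?_ (.of_forall fun x => ?_)
  · exact ((by fun_prop : Measurable fun y : Fin n → ℝ => exp (c * ‖y‖)).comp
      (measurable_eig_comp_hermitianEquiv σ)).aestronglyMeasurable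
  · simp only [Function.comp_apply, map_one, one_mul, Complex.norm_real, norm_eq_abs, abs_exp]
    gcongr
    · exact le_abs_self c
    · exact norm_eig_comp_hermitianEquiv_le x σ

lemma integral_evalReal_correlationMeasure_gue_one (hn : n ≤ N) {P : MvPolynomial (Fin n) ℂ}
    (hP : Integrable (fun y => evalReal y P) (correlationMeasure n (gue N 1))) :
    ∫ y, evalReal y P ∂correlationMeasure n (gue N 1) =
      ∫ y, evalReal y P * hermiteKernelDet N y ∂gaussianPi (Fin n) := by
  have hmeas (μ : Measure (Fin n → ℝ)) : AEStronglyMeasurable (fun y => evalReal y P) μ :=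
    (continuous_evalReal P).aestronglyMeasurable
  rw [correlationMeasure_gue_one] at hP ⊢
  rw [integrable_finsetSum_measure] at hP
  rw [integral_finsetSum_measure hP]
  simp only [integral_map (measurable_eig_comp_hermitianEquiv _).aemeasurable (hmeas _)]
  rw [← integral_finsetSum, integral_sum_evalReal_eig hn, gaussianExpectation_apply]
  · simp only [map_mul, evalReal_det_hermiteKernelMatrix]
  · exact fun σ hσ => (integrable_map_measure (hmeas _)
      (measurable_eig_comp_hermitianEquiv σ).aemeasurable).1 (hP σ hσ)

/-- The linear form `L`, as a polynomial in the coordinates. -/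
def linearPoly (L : StrongDual ℝ (Fin n → ℝ)) : MvPolynomial (Fin n) ℂ :=
  ∑ i, C (L (Pi.single i 1) : ℂ) * X i

lemma evalReal_linearPoly_pow (L : StrongDual ℝ (Fin n → ℝ)) (m : ℕ) (y : Fin n → ℝ) :
    evalReal y (linearPoly L ^ m) = (L y ^ m : ℝ) := by
  have coordinates : L y = ∑ i, L (Pi.single i 1) * y i := by
    conv_lhs => rw [pi_eq_sum_univ' y, map_sum]
    exact Finset.sum_congr rfl fun i _ => by rw [map_smul, smul_eq_mul, mul_comm]
  simp [coordinates, linearPoly, evalReal]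

theorem correlationMeasure_gue_one_eq_withDensity (hn : n ≤ N) :
    correlationMeasure n (gue N 1) =
      (gaussianPi (Fin n)).withDensity fun x => ENNReal.ofReal (hermiteKernelDet N x) := by
  have hmeas : Measurable fun x : Fin n → ℝ => ENNReal.ofReal (hermiteKernelDet N x) :=
    continuous_hermiteKernelDet.measurable.ennreal_ofReal
  have integrable_det : Integrable (hermiteKernelDet N) (gaussianPi (Fin n)) := by
    simpa using integrable_hermiteKernelDet_mul_exp (N := N) (n := n) 0
  have : IsFiniteMeasure _ := isFiniteMeasure_withDensity_ofReal integrable_det.2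
  have hexp := integrable_exp_norm_correlationMeasure_gue_one (N := N) (n := n)
  refine ext_of_integral_dual_pow_eq hexp (fun c => ?_) fun L m => ?_
  · rw [integrable_withDensity_iff hmeas (by simp)]
    refine (integrable_hermiteKernelDet_mul_exp (N := N) |c|).mono'
      (by fun_prop : Measurable _).aestronglyMeasurable (.of_forall fun x => ?_)
    rw [ENNReal.toReal_ofReal (hermiteKernelDet_nonneg x), norm_mul, norm_eq_abs, abs_exp,
      norm_of_nonneg (hermiteKernelDet_nonneg x), mul_comm]
    gcongr
    · exact hermiteKernelDet_nonneg x
    · exact le_abs_self c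
    · exact (pi_norm_le_iff_of_nonneg (Finset.sum_nonneg fun i _ => abs_nonneg _)).2 fun i =>
        Finset.single_le_sum (f := fun i => |x i|) (fun i _ => abs_nonneg _) (Finset.mem_univ i)
  · have hint : Integrable (fun y => L y ^ m) (correlationMeasure n (gue N 1)) :=
      integrable_pow_of_mem_interior_integrableExpSet
        (by simp [integrableExpSet_eq_univ hexp L]) m
    have moments := integral_evalReal_correlationMeasure_gue_one hn (P := linearPoly L ^ m)
      (by simp only [evalReal_linearPoly_pow]; exact hint.ofReal)
    simp only [evalReal_linearPoly_pow, ← Complex.ofReal_mul, integral_complex_ofReal] at moments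
    rw [integral_withDensity_eq_integral_toReal_smul hmeas (by simp), Complex.ofReal_inj.1 moments]
    simp only [ENNReal.toReal_ofReal (hermiteKernelDet_nonneg _), smul_eq_mul, mul_comm]

end GaussianUnitaryEnsemble

section DensityTransport

open ProbabilityTheory

lemma map_withDensity_equiv {α β : Type*} [MeasurableSpace α] [MeasurableSpace β] (e : α ≃ᵐ β)
    (μ : Measure α) (f : α → ENNReal) :
    (μ.withDensity f).map e = (μ.map e).withDensity (f ∘ e.symm) := by
  ext B hB
  rw [e.map_apply, withDensity_apply _ (e.measurable hB), withDensity_apply _ hB, e.restrict_map,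
    lintegral_map_equiv]
  simp

variable {ι : Type*} [Fintype ι]

lemma pi_withDensity_ofReal {X : ι → Type*} [∀ i, MeasurableSpace (X i)]
    {μ : ∀ i, Measure (X i)} [∀ i, SigmaFinite (μ i)] {f : ∀ i, X i → ℝ}
    (hf : ∀ i, Integrable (f i) (μ i)) (hf₀ : ∀ i x, 0 ≤ f i x) :
    Measure.pi (fun i => (μ i).withDensity fun x => ENNReal.ofReal (f i x)) =
      (Measure.pi μ).withDensity fun x => ENNReal.ofReal (∏ i, f i (x i)) := by
  have (i : ι) : IsFiniteMeasure ((μ i).withDensity fun x => ENNReal.ofReal (f i x)) :=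
    isFiniteMeasure_withDensity_ofReal (hf i).2
  refine Measure.pi_eq fun s hs => ?_
  have hfs (i : ι) : Integrable (f i) ((μ i).restrict (s i)) := (hf i).restrict
  rw [withDensity_apply _ (.univ_pi hs), Measure.restrict_pi_pi,
    ← ofReal_integral_eq_lintegral_ofReal (.fintype_prod_dep hfs)
      (.of_forall fun x => Finset.prod_nonneg fun i _ => hf₀ i _),
    integral_fintype_prod_eq_prod,
    ENNReal.ofReal_prod_of_nonneg fun i _ => integral_nonneg (hf₀ i)]
  refine Finset.prod_congr rfl fun i _ => ?_
  rw [withDensity_apply _ (hs i), ofReal_integral_eq_lintegral_ofReal (hfs i) (.of_forall (hf₀ i))]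

lemma pi_gaussianReal_eq_withDensity {v : NNReal} (hv : v ≠ 0) :
    Measure.pi (fun _ : ι => gaussianReal 0 v) =
      volume.withDensity fun x => ENNReal.ofReal (∏ i, gaussianPDFReal 0 v (x i)) := by
  simp only [gaussianReal_of_var_ne_zero _ hv, gaussianPDF_def]
  exact pi_withDensity_ofReal (fun _ => integrable_gaussianPDFReal 0 v)
    fun _ => gaussianPDFReal_nonneg 0 v

lemma map_sqrt_smul_gaussianPi (s : NNReal) :
    (gaussianPi ι).map (√(s : ℝ) • ·) = Measure.pi fun _ => gaussianReal 0 s := by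
  have scale : (gaussianReal 0 1).map (√(s : ℝ) * ·) = gaussianReal 0 s := by
    rw [gaussianReal_map_const_mul, mul_zero, mul_one]
    congr 1
    ext
    simp
  rw [← scale]
  exact Measure.pi_map_pi fun _ => (measurable_const_mul _).aemeasurable

end DensityTransport

section GUECorrelationDensity

open ProbabilityTheory

variable {N n : ℕ} {s : ℝ}

/-- The determinant of the rescaled Hermite kernel at the points `x`, which for `s > 0` is the
`n`-point correlation density of `gue N s`. -/
def kernelDet (N : ℕ) {n : ℕ} (x : Fin n → ℝ) (s : ℂ) : ℂ :=
  Matrix.det <| Matrix.of fun i j => kernelKt N (x i) (x j) s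

/-- The correlation density of `gue N s` in real form: Gaussian weights of variance `s` times the
unweighted kernel determinant at the rescaled points. -/
def gueDensity (N : ℕ) {n : ℕ} (s : ℝ) (x : Fin n → ℝ) : ℝ :=
  (∏ i, gaussianPDFReal 0 s.toNNReal (x i)) * hermiteKernelDet N ((√s)⁻¹ • x)

lemma gueDensity_nonneg (x : Fin n → ℝ) : 0 ≤ gueDensity N s x :=
  mul_nonneg (Finset.prod_nonneg fun _ _ => gaussianPDFReal_nonneg _ _ _)
    (hermiteKernelDet_nonneg _)

lemma measurable_gueDensity : Measurable (gueDensity N s (n := n)) := by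
  have := (continuous_hermiteKernelDet (N := N) (n := n)).measurable
  unfold gueDensity
  fun_prop

theorem correlationMeasure_gue_eq_withDensity (hn : n ≤ N) (hs : 0 < s) :
    correlationMeasure n (gue N s) =
      volume.withDensity fun x => ENNReal.ofReal (gueDensity N s x) := by
  have sqrt_ne : √s ≠ 0 := (sqrt_pos.2 hs).ne'
  let scale : (Fin n → ℝ) ≃ᵐ (Fin n → ℝ) := MeasurableEquiv.smul₀ (√s) sqrt_ne
  have weight : (gaussianPi (Fin n)).map scale =
      volume.withDensity fun x => ENNReal.ofReal (∏ i, gaussianPDFReal 0 s.toNNReal (x i)) := by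
    rw [← pi_gaussianReal_eq_withDensity (toNNReal_pos.2 hs).ne', ← map_sqrt_smul_gaussianPi,
      coe_toNNReal _ hs.le]
    rfl
  calc correlationMeasure n (gue N s)
      = ((gaussianPi (Fin n)).withDensity
          fun x => ENNReal.ofReal (hermiteKernelDet N x)).map scale := by
        rw [correlationMeasure_gue, correlationMeasure_gue_one_eq_withDensity hn]
        rfl
    _ = _ := by
        rw [map_withDensity_equiv, weight, ← withDensity_mul _ (by fun_prop)
          (continuous_hermiteKernelDet.measurable.ennreal_ofReal.comp scale.symm.measurable)]
        congr 1 with x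
        rw [gueDensity, ENNReal.ofReal_mul (Finset.prod_nonneg fun _ _ =>
          gaussianPDFReal_nonneg _ _ _)]
        rfl

lemma kernelK_ofReal (x y : ℝ) : kernelK N x y =
    ((√(gaussianPDFReal 0 1 x) * √(gaussianPDFReal 0 1 y) *
      ∑ k ∈ Finset.range N, (k.factorial : ℝ)⁻¹ * (Polynomial.aeval x (Polynomial.hermite k) *
        Polynomial.aeval y (Polynomial.hermite k)) : ℝ) : ℂ) := by
  have sqrt_pdf (x : ℝ) : √(gaussianPDFReal 0 1 x) =
      ((2 * π) ^ ((1 : ℝ) / 4))⁻¹ * exp (-x ^ 2 / 4) := by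
    rw [sqrt_eq_iff_mul_self_eq (gaussianPDFReal_nonneg _ _ _) (by positivity), gaussianPDFReal,
      mul_mul_mul_comm, ← mul_inv, ← exp_add, ← rpow_add (by positivity), sqrt_eq_rpow]
    simp only [NNReal.coe_one, mul_one, sub_zero, ← add_div]
    congr 2 <;> ring_nf
  rw [kernelK, Finset.mul_sum, Complex.ofReal_sum]
  refine Finset.sum_congr rfl fun k _ => ?_
  have sqrt_factorial : (√k.factorial)⁻¹ * (√k.factorial)⁻¹ = (k.factorial : ℝ)⁻¹ := by
    rw [← mul_inv, mul_self_sqrt (by positivity)]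
  simp only [hermitePhi, hermiteP, hermiteH, ← ofReal_aeval_hermite, sqrt_pdf,
    ← sqrt_factorial, div_eq_mul_inv]
  push_cast
  rw [mul_inv]
  ring

lemma gaussianPDFReal_toNNReal (hs : 0 < s) (y : ℝ) : gaussianPDFReal 0 s.toNNReal y =
    (√s)⁻¹ * gaussianPDFReal 0 1 ((√s)⁻¹ * y) := by
  simp only [gaussianPDFReal, coe_toNNReal _ hs.le, NNReal.coe_one, mul_one, sub_zero]
  rw [sqrt_mul (by positivity), mul_inv, mul_pow, inv_pow, sq_sqrt hs.le]
  ring_nf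

lemma kernelKt_ofReal (hs : 0 < s) (x y : ℝ) : kernelKt N x y s =
    ((√(gaussianPDFReal 0 s.toNNReal x) * (√(gaussianPDFReal 0 s.toNNReal y) *
      ∑ k ∈ Finset.range N, (k.factorial : ℝ)⁻¹ *
        (Polynomial.aeval ((√s)⁻¹ * x) (Polynomial.hermite k) *
          Polynomial.aeval ((√s)⁻¹ * y) (Polynomial.hermite k))) : ℝ) : ℂ) := by
  have principal_pow : (s : ℂ) ^ (-(1 : ℂ) / 2) = ((√s)⁻¹ : ℝ) := by
    rw [sqrt_eq_rpow, ← rpow_neg hs.le, Complex.ofReal_cpow hs.le]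
    push_cast
    ring_nf
  rw [kernelKt, principal_pow, ← Complex.ofReal_mul, ← Complex.ofReal_mul, kernelK_ofReal,
    ← Complex.ofReal_mul]
  have sqrt_sq_inv : √(√s)⁻¹ * √(√s)⁻¹ = (√s)⁻¹ := mul_self_sqrt (by positivity)
  simp only [gaussianPDFReal_toNNReal hs, sqrt_mul (inv_nonneg.2 (sqrt_nonneg s)),
    mul_comm _ (√s)⁻¹]
  congr 1
  linear_combination (-(√(gaussianPDFReal 0 1 ((√s)⁻¹ * x)) *
    √(gaussianPDFReal 0 1 ((√s)⁻¹ * y)) * ∑ k ∈ Finset.range N, (k.factorial : ℝ)⁻¹ *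
      (Polynomial.aeval ((√s)⁻¹ * x) (Polynomial.hermite k) *
        Polynomial.aeval ((√s)⁻¹ * y) (Polynomial.hermite k)))) * sqrt_sq_inv

lemma kernelDet_ofReal (hs : 0 < s) (x : Fin n → ℝ) : kernelDet N x s = gueDensity N s x := by
  let w (i : Fin n) : ℝ := √(gaussianPDFReal 0 s.toNNReal (x i))
  let K : Matrix (Fin n) (Fin n) ℝ := Matrix.of fun i j => ∑ k ∈ Finset.range N,
    (k.factorial : ℝ)⁻¹ * (Polynomial.aeval (((√s)⁻¹ • x) i) (Polynomial.hermite k) *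
      Polynomial.aeval (((√s)⁻¹ • x) j) (Polynomial.hermite k))
  calc kernelDet N x s
      = (Matrix.det (Matrix.of fun i j => w i * Matrix.of (fun i j => w j * K i j) i j) : ℝ) :=
        (congrArg Matrix.det (Matrix.ext fun i j => kernelKt_ofReal hs (x i) (x j))).trans
          (Complex.ofRealHom.map_det _).symm
    _ = gueDensity N s x := by
        rw [Matrix.det_mul_column, Matrix.det_mul_row, ← mul_assoc, ← Finset.prod_mul_distrib]
        simp only [mul_self_sqrt (gaussianPDFReal_nonneg _ _ _), w]
        rfl

end GUECorrelationDensity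

section RotationInvariance

open ProbabilityTheory

variable {E : Type*} [NormedAddCommGroup E] [InnerProductSpace ℝ E] [MeasurableSpace E]
  [BorelSpace E] {μ σ : Measure E}

lemma charFun_eq_of_norm_eq (hμ : ∀ T : E ≃ₗᵢ[ℝ] E, μ.map T = μ) {t t' : E} (h : ‖t‖ = ‖t'‖) :
    charFun μ t = charFun μ t' := by
  obtain ⟨T, rfl⟩ : ∃ T : E ≃ₗᵢ[ℝ] E, T t = t' := ⟨_, Submodule.reflection_sub h⟩
  conv_rhs => rw [← hμ T]
  rw [charFun_apply, charFun_apply,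
    integral_map (by fun_prop) (by fun_prop)]
  simp

variable [FiniteDimensional ℝ E]

lemma map_linearIsometryEquiv_map_div_norm_smul (hσ : ∀ T : E ≃ₗᵢ[ℝ] E, σ.map T = σ) (ρ : ℝ)
    (T : E ≃ₗᵢ[ℝ] E) :
    (σ.map fun y => (ρ / ‖y‖) • y).map T = σ.map fun y => (ρ / ‖y‖) • y := by
  conv_rhs => rw [← hσ T]
  rw [Measure.map_map (by fun_prop) (by fun_prop), Measure.map_map (by fun_prop) (by fun_prop)]
  congr 1 with y
  simp

/-- The characteristic function of a rotation-invariant law depends only on the norm of its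
argument, so `x` and `t` can exchange roles inside the integral over directions. -/
theorem eq_map_norm_div_norm_smul [IsProbabilityMeasure μ] [IsProbabilityMeasure σ]
    (hμ : ∀ T : E ≃ₗᵢ[ℝ] E, μ.map T = μ) (hσ : ∀ T : E ≃ₗᵢ[ℝ] E, σ.map T = σ)
    (hσ₀ : ∀ᵐ y ∂σ, y ≠ 0) :
    μ = (μ.prod σ).map fun p => (‖p.1‖ / ‖p.2‖) • p.2 := by
  have : IsProbabilityMeasure ((μ.prod σ).map fun p : E × E => (‖p.1‖ / ‖p.2‖) • p.2) :=
    Measure.isProbabilityMeasure_map (by fun_prop)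
  have bounded (f : E × E → ℝ) (hf : Measurable f) :
      Integrable (fun p => Complex.exp (f p * Complex.I)) (μ.prod σ) :=
    .of_bound (by fun_prop) 1 (.of_forall fun p => (Complex.norm_exp_ofReal_mul_I _).le)
  refine Measure.ext_of_charFun (funext fun t => ?_)
  have resample (x : E) : ∫ y, Complex.exp (inner ℝ ((‖x‖ / ‖y‖) • y) t * Complex.I) ∂σ =
      ∫ y, Complex.exp (inner ℝ x ((‖t‖ / ‖y‖) • y) * Complex.I) ∂σ := by
    have h := charFun_eq_of_norm_eq (map_linearIsometryEquiv_map_div_norm_smul hσ 1)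
      (t := ‖x‖ • t) (t' := ‖t‖ • x) (by simp [norm_smul, mul_comm])
    rw [charFun_apply, charFun_apply, integral_map (by fun_prop) (by fun_prop),
      integral_map (by fun_prop) (by fun_prop)] at h
    simpa only [real_inner_smul_left, real_inner_smul_right, real_inner_comm, div_eq_mul_inv,
      one_mul, mul_assoc, mul_left_comm] using h
  calc charFun μ t = ∫ _, charFun μ t ∂σ := by simp
    _ = ∫ y, charFun μ ((‖t‖ / ‖y‖) • y) ∂σ := by
        refine integral_congr_ae ?_
        filter_upwards [hσ₀] with y hy
        refine charFun_eq_of_norm_eq hμ ?_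
        rw [norm_smul, norm_div, norm_norm, norm_norm, div_mul_cancel₀ _ (norm_ne_zero_iff.2 hy)]
    _ = ∫ y, ∫ x, Complex.exp (inner ℝ x ((‖t‖ / ‖y‖) • y) * Complex.I) ∂μ ∂σ := by
        simp only [charFun_apply]
    _ = ∫ x, ∫ y, Complex.exp (inner ℝ x ((‖t‖ / ‖y‖) • y) * Complex.I) ∂σ ∂μ :=
        (integral_integral_swap (bounded _ (by fun_prop))).symm
    _ = ∫ x, ∫ y, Complex.exp (inner ℝ ((‖x‖ / ‖y‖) • y) t * Complex.I) ∂σ ∂μ := by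
        simp only [resample]
    _ = charFun ((μ.prod σ).map fun p => (‖p.1‖ / ‖p.2‖) • p.2) t := by
        rw [charFun_apply, integral_map (by fun_prop) (by fun_prop),
          integral_prod _ (bounded _ (by fun_prop))]

lemma lintegral_eq_lintegral_norm_div_norm_smul [IsProbabilityMeasure μ] [IsProbabilityMeasure σ]
    (hμ : ∀ T : E ≃ₗᵢ[ℝ] E, μ.map T = μ) (hσ : ∀ T : E ≃ₗᵢ[ℝ] E, σ.map T = σ)
    (hσ₀ : ∀ᵐ y ∂σ, y ≠ 0) {f : E → ENNReal} (hf : Measurable f) :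
    ∫⁻ x, f x ∂μ = ∫⁻ x, ∫⁻ y, f ((‖x‖ / ‖y‖) • y) ∂σ ∂μ := by
  conv_lhs => rw [eq_map_norm_div_norm_smul hμ hσ hσ₀]
  rw [lintegral_map hf (by fun_prop), lintegral_prod _ (by fun_prop)]

lemma lintegral_eq_lintegral_div_norm_smul_of_norm_eq [IsProbabilityMeasure μ]
    [IsProbabilityMeasure σ] (hμ : ∀ T : E ≃ₗᵢ[ℝ] E, μ.map T = μ)
    (hσ : ∀ T : E ≃ₗᵢ[ℝ] E, σ.map T = σ) (hσ₀ : ∀ᵐ y ∂σ, y ≠ 0) {ρ : ℝ}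
    (hρ : ∀ᵐ x ∂μ, ‖x‖ = ρ) {f : E → ENNReal} (hf : Measurable f) :
    ∫⁻ x, f x ∂μ = ∫⁻ y, f ((ρ / ‖y‖) • y) ∂σ := by
  rw [lintegral_eq_lintegral_norm_div_norm_smul hμ hσ hσ₀ hf]
  calc _ = ∫⁻ _, ∫⁻ y, f ((ρ / ‖y‖) • y) ∂σ ∂μ := by
        refine lintegral_congr_ae ?_
        filter_upwards [hρ] with x hx
        rw [hx]
    _ = _ := by simp

end RotationInvariance

section ChiSquare

open ProbabilityTheory

lemma integral_norm_sq_addHaar {E : Type*} [NormedAddCommGroup E] [NormedSpace ℝ E]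
    [FiniteDimensional ℝ E] [Nontrivial E] [MeasurableSpace E] [BorelSpace E] (μ : Measure E)
    [μ.IsAddHaarMeasure] (g : ℝ → ℝ) :
    ∫ x, g (‖x‖ ^ 2) ∂μ = Module.finrank ℝ E * μ.real (Metric.ball 0 1) / 2 *
      ∫ u in Set.Ioi 0, u ^ ((Module.finrank ℝ E : ℝ) / 2 - 1) * g u := by
  have radial : ∫ r in Set.Ioi (0 : ℝ), r ^ (Module.finrank ℝ E - 1) • g (r ^ 2) =
      (∫ u in Set.Ioi 0, u ^ ((Module.finrank ℝ E : ℝ) / 2 - 1) * g u) / 2 := by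
    rw [← integral_comp_rpow_Ioi_of_pos (g := fun u => u ^ (_ : ℝ) * g u) two_pos, ← integral_div]
    refine setIntegral_congr_fun measurableSet_Ioi fun r (hr : 0 < r) => ?_
    have exponent : ((Module.finrank ℝ E - 1 : ℕ) : ℝ) =
        2 * ((Module.finrank ℝ E : ℝ) / 2 - 1) + 1 := by
      rw [Nat.cast_pred Module.finrank_pos]
      ring
    simp only [smul_eq_mul]
    rw [← rpow_natCast r, exponent, rpow_add_one hr.ne', rpow_mul hr.le, rpow_two]
    norm_num
    ring
  rw [integral_fun_norm_addHaar μ fun r => g (r ^ 2), radial]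
  simp only [nsmul_eq_mul, smul_eq_mul]
  ring

lemma withDensity_chiSqPDF (m : ℕ) :
    volume.withDensity (fun u => ENNReal.ofReal (chiSqPDF m u)) = gammaMeasure (m / 2) (1 / 2) := by
  refine withDensity_congr_ae ?_
  filter_upwards [Measure.ae_ne volume 0] with u hu
  rw [gammaPDF, gammaPDFReal, chiSqPDF]
  congr 1
  refine ite_congr (propext ⟨le_of_lt, fun h => h.lt_of_ne' hu⟩) (fun _ => ?_) fun _ => rfl
  rw [one_div, inv_rpow zero_le_two, mul_inv, neg_div, div_eq_inv_mul u 2, inv_eq_one_div 2]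
  ring_nf

lemma isProbabilityMeasure_withDensity_chiSqPDF {m : ℕ} (hm : 0 < m) :
    IsProbabilityMeasure (volume.withDensity fun u => ENNReal.ofReal (chiSqPDF m u)) := by
  rw [withDensity_chiSqPDF]
  exact isProbabilityMeasure_gammaMeasure (by positivity) (by positivity)

lemma measurable_chiSqPDF (m : ℕ) : Measurable (chiSqPDF m) :=
  Measurable.ite measurableSet_Ioi (by fun_prop) measurable_const

lemma measurable_chiSqPDFscaled (m : ℕ) (s : ℝ) : Measurable (chiSqPDFscaled m s) :=
  ((measurable_chiSqPDF m).comp (measurable_id.div_const s)).const_mul _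

variable {ι : Type*} [Fintype ι]

lemma stdGaussian_eq_withDensity : stdGaussian (EuclideanSpace ℝ ι) = volume.withDensity fun x =>
    ENNReal.ofReal ((√(2 * π))⁻¹ ^ Fintype.card ι * exp (-(‖x‖ ^ 2) / 2)) := by
  let e := MeasurableEquiv.toLp 2 (ι → ℝ)
  have density (x : ι → ℝ) : ∏ i, gaussianPDFReal 0 1 (x i) =
      (√(2 * π))⁻¹ ^ Fintype.card ι * exp (-(‖WithLp.toLp 2 x‖ ^ 2) / 2) := by
    simp [gaussianPDFReal, Finset.prod_mul_distrib, ← exp_sum, EuclideanSpace.norm_sq_eq, neg_div,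
      Finset.sum_div]
  rw [← map_pi_eq_stdGaussian, pi_gaussianReal_eq_withDensity one_ne_zero]
  refine (map_withDensity_equiv e _ _).trans ?_
  rw [show volume.map e = volume from (PiLp.volume_preserving_toLp ι).map_eq]
  congr 1 with x
  simp [density, e]

lemma stdGaussian_ae_ne_zero [Nonempty ι] : ∀ᵐ x ∂stdGaussian (EuclideanSpace ℝ ι), x ≠ 0 := by
  rw [stdGaussian_eq_withDensity]
  exact (withDensity_absolutelyContinuous _ _).ae_le (Measure.ae_ne volume 0)

lemma integral_withDensity_chiSqPDF (m : ℕ) (g : ℝ → ℝ) :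
    ∫ u, g u ∂volume.withDensity (fun u => ENNReal.ofReal (chiSqPDF m u)) =
      (2 ^ ((m : ℝ) / 2) * Gamma (m / 2))⁻¹ *
        ∫ u in Set.Ioi 0, u ^ ((m : ℝ) / 2 - 1) * (exp (-u / 2) * g u) := by
  rw [integral_withDensity_eq_integral_toReal_smul (measurable_chiSqPDF m).ennreal_ofReal
    (.of_forall fun _ => ENNReal.ofReal_lt_top), ← integral_const_mul,
    ← integral_indicator measurableSet_Ioi]
  refine integral_congr_ae (.of_forall fun u => ?_)
  by_cases hu : 0 < u
  · simp only [chiSqPDF, hu, if_true, Set.indicator_of_mem (Set.mem_Ioi.2 hu), smul_eq_mul]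
    rw [ENNReal.toReal_ofReal (by positivity)]
    ring
  · simp [chiSqPDF, hu]

lemma exists_integral_norm_sq_stdGaussian [Nonempty ι] : ∃ c : ℝ, ∀ g : ℝ → ℝ,
    ∫ x, g (‖x‖ ^ 2) ∂stdGaussian (EuclideanSpace ℝ ι) =
      c * ∫ u, g u ∂volume.withDensity fun u => ENNReal.ofReal (chiSqPDF (Fintype.card ι) u) := by
  let E := EuclideanSpace ℝ ι
  let a : ℝ := 2 ^ ((Fintype.card ι : ℝ) / 2) * Gamma ((Fintype.card ι : ℝ) / 2)
  have a_pos : 0 < a := mul_pos (by positivity) (Gamma_pos_of_pos (by positivity))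
  refine ⟨Fintype.card ι * volume.real (Metric.ball (0 : E) 1) / 2 *
    (√(2 * π))⁻¹ ^ Fintype.card ι * a, fun g => ?_⟩
  calc ∫ x, g (‖x‖ ^ 2) ∂stdGaussian E
      = ∫ x : E, (√(2 * π))⁻¹ ^ Fintype.card ι * (exp (-(‖x‖ ^ 2) / 2) * g (‖x‖ ^ 2)) := by
        rw [stdGaussian_eq_withDensity, integral_withDensity_eq_integral_toReal_smul
          (by fun_prop) (.of_forall fun _ => ENNReal.ofReal_lt_top)]
        refine integral_congr_ae (.of_forall fun x => ?_)
        simp only [smul_eq_mul]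
        rw [ENNReal.toReal_ofReal (by positivity), mul_assoc]
    _ = _ := by
        rw [integral_const_mul, integral_norm_sq_addHaar volume fun u => exp (-u / 2) * g u,
          integral_withDensity_chiSqPDF, finrank_euclideanSpace, mul_assoc _ a,
          mul_inv_cancel_left₀ a_pos.ne']
        ring

theorem map_norm_sq_stdGaussian [Nonempty ι] :
    (stdGaussian (EuclideanSpace ℝ ι)).map (fun x => ‖x‖ ^ 2) =
      volume.withDensity fun u => ENNReal.ofReal (chiSqPDF (Fintype.card ι) u) := by
  have := isProbabilityMeasure_withDensity_chiSqPDF (m := Fintype.card ι) Fintype.card_pos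
  obtain ⟨c, hc⟩ := exists_integral_norm_sq_stdGaussian (ι := ι)
  have c_eq_one : c = 1 := by simpa using (hc fun _ => 1).symm
  have := Measure.isProbabilityMeasure_map (μ := stdGaussian (EuclideanSpace ℝ ι))
    (f := fun x => ‖x‖ ^ 2) (by fun_prop)
  ext B hB
  rw [← measureReal_eq_measureReal_iff, ← integral_indicator_one hB, ← integral_indicator_one hB,
    integral_map (by fun_prop) (measurable_one.indicator hB).aestronglyMeasurable, hc, c_eq_one,
    one_mul]

lemma map_mul_norm_sq_stdGaussian [Nonempty ι] {s : ℝ} (hs : 0 < s) :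
    (stdGaussian (EuclideanSpace ℝ ι)).map (fun x => s * ‖x‖ ^ 2) =
      volume.withDensity fun u => ENNReal.ofReal (chiSqPDFscaled (Fintype.card ι) s u) := by
  let e : ℝ ≃ᵐ ℝ := MeasurableEquiv.mulLeft₀ s hs.ne'
  have map_volume : (volume : Measure ℝ).map e = ENNReal.ofReal s⁻¹ • volume := by
    rw [← abs_of_pos (inv_pos.2 hs)]
    exact Real.map_volume_mul_left hs.ne'
  calc (stdGaussian (EuclideanSpace ℝ ι)).map (fun x => s * ‖x‖ ^ 2)
      = ((stdGaussian (EuclideanSpace ℝ ι)).map fun x => ‖x‖ ^ 2).map e :=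
        (Measure.map_map e.measurable (by fun_prop)).symm
    _ = _ := by
        rw [map_norm_sq_stdGaussian, map_withDensity_equiv, map_volume, withDensity_smul_measure,
          ← withDensity_smul _
            ((measurable_chiSqPDF _).ennreal_ofReal.comp e.symm.measurable)]
        congr 1 with u
        simp only [chiSqPDFscaled, Pi.smul_apply, Function.comp_apply, smul_eq_mul,
          div_eq_inv_mul u, ENNReal.ofReal_mul (inv_nonneg.2 hs.le)]
        rfl

end ChiSquare

section SphereMixture

open ProbabilityTheory

variable {N n : ℕ} {s : ℝ} {ν : Measure (HermMat N)}

lemma OrthoInvariant.map_hermitianEquiv_symm (hν : OrthoInvariant ν)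
    (T : EuclideanSpace ℝ (Fin N × Fin N) ≃ₗᵢ[ℝ] EuclideanSpace ℝ (Fin N × Fin N)) :
    (ν.map (hermitianEquiv N).symm).map T = ν.map (hermitianEquiv N).symm := by
  let S : HermMat N ≃ₗ[ℝ] HermMat N :=
    (hermitianEquiv N).symm ≪≫ₗ T.toLinearEquiv ≪≫ₗ hermitianEquiv N
  have hT : Measurable T := by fun_prop
  have hS : Measurable S :=
    measurable_hermitianEquiv.comp (hT.comp measurable_hermitianEquiv_symm)
  have map_S : ν.map S = ν := by
    refine hν S fun A B => ?_
    obtain ⟨a, rfl⟩ := (hermitianEquiv N).surjective A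
    obtain ⟨b, rfl⟩ := (hermitianEquiv N).surjective B
    simp [S, re_trace_hermitianEquiv_mul]
  conv_rhs => rw [← map_S]
  rw [Measure.map_map hT measurable_hermitianEquiv_symm,
    Measure.map_map measurable_hermitianEquiv_symm hS]
  congr 1 with A
  simp [S]

lemma IsHSE.lintegral_eq [NeZero N] (hν : IsHSE s ν) {f : HermMat N → ENNReal}
    (hf : Measurable f) : ∫⁻ A, f A ∂ν = ∫⁻ y, f (hermitianEquiv N ((√(s * N ^ 2) / ‖y‖) • y))
      ∂stdGaussian (EuclideanSpace ℝ (Fin N × Fin N)) := by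
  obtain ⟨_, trSq_eq, invariant⟩ := hν
  have := Measure.isProbabilityMeasure_map (μ := ν)
    (measurable_hermitianEquiv_symm (N := N)).aemeasurable
  have norm_eq : ∀ᵐ x ∂ν.map (hermitianEquiv N).symm, ‖x‖ = √(s * N ^ 2) := by
    rw [ae_map_iff measurable_hermitianEquiv_symm.aemeasurable
      (measurableSet_eq_fun (by fun_prop) (by fun_prop))]
    filter_upwards [show ∀ᵐ A ∂ν, trSq A = s * N ^ 2 from trSq_eq] with A hA
    rw [← hA, ← (hermitianEquiv N).apply_symm_apply A, trSq_hermitianEquiv,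
      sqrt_sq (norm_nonneg _), (hermitianEquiv N).apply_symm_apply]
  have hF : Measurable fun x => f (hermitianEquiv N x) := hf.comp measurable_hermitianEquiv
  calc ∫⁻ A, f A ∂ν = ∫⁻ x, f (hermitianEquiv N x) ∂ν.map (hermitianEquiv N).symm := by
        simp [lintegral_map hF measurable_hermitianEquiv_symm]
    _ = _ := lintegral_eq_lintegral_div_norm_smul_of_norm_eq invariant.map_hermitianEquiv_symm
        (fun T => stdGaussian_map T) stdGaussian_ae_ne_zero norm_eq hF

theorem lintegral_sqrt_smul_stdGaussian {ι : Type*} [Fintype ι] [Nonempty ι] (hs : 0 < s)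
    {F : EuclideanSpace ℝ ι → ENNReal} (hF : Measurable F) :
    ∫⁻ x, F (√s • x) ∂stdGaussian (EuclideanSpace ℝ ι) =
      ∫⁻ u, ENNReal.ofReal (chiSqPDFscaled (Fintype.card ι) s u) *
        ∫⁻ y, F ((√u / ‖y‖) • y) ∂stdGaussian (EuclideanSpace ℝ ι) := by
  let sphereMean (u : ℝ) : ENNReal :=
    ∫⁻ y, F ((√u / ‖y‖) • y) ∂stdGaussian (EuclideanSpace ℝ ι)
  have measurable_sphereMean : Measurable sphereMean :=
    Measurable.lintegral_prod_right'
      (f := fun p : ℝ × EuclideanSpace ℝ ι => F ((√p.1 / ‖p.2‖) • p.2)) (by fun_prop)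
  have invariant (T : EuclideanSpace ℝ ι ≃ₗᵢ[ℝ] EuclideanSpace ℝ ι) :
      (stdGaussian (EuclideanSpace ℝ ι)).map T = stdGaussian (EuclideanSpace ℝ ι) :=
    stdGaussian_map T
  rw [lintegral_eq_lintegral_norm_div_norm_smul (f := fun x => F (√s • x)) invariant invariant
    stdGaussian_ae_ne_zero (by fun_prop)]
  calc _ = ∫⁻ x, sphereMean (s * ‖x‖ ^ 2) ∂stdGaussian (EuclideanSpace ℝ ι) := by
        simp only [sphereMean, sqrt_mul hs.le, sqrt_sq (norm_nonneg _), smul_smul, mul_div_assoc]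
    _ = _ := by
        rw [← lintegral_map (g := fun x => s * ‖x‖ ^ 2) measurable_sphereMean (by fun_prop),
          map_mul_norm_sq_stdGaussian hs, lintegral_withDensity_eq_lintegral_mul _
            (measurable_chiSqPDFscaled _ _).ennreal_ofReal measurable_sphereMean]
        rfl

lemma chiSqPDFscaled_of_nonpos (m : ℕ) {u : ℝ} (hs : 0 < s) (hu : u ≤ 0) :
    chiSqPDFscaled m s u = 0 := by
  rw [chiSqPDFscaled, chiSqPDF, if_neg (div_nonpos_of_nonpos_of_nonneg hu hs.le).not_gt, mul_zero]

theorem lintegral_gue_eq_lintegral_hse [NeZero N] {ν : ℝ → Measure (HermMat N)}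
    (hν : ∀ s, 0 < s → IsHSE s (ν s)) (hs : 0 < s) {f : HermMat N → ENNReal} (hf : Measurable f) :
    ∫⁻ A, f A ∂gue N s = ∫⁻ u in Set.Ioi 0, ENNReal.ofReal (chiSqPDFscaled (N ^ 2) s u) *
      ∫⁻ A, f A ∂ν (u / N ^ 2) := by
  rw [gue, lintegral_map hf (measurable_hermitianEquiv_smul _),
    lintegral_sqrt_smul_stdGaussian (F := fun x => f (hermitianEquiv N x)) hs
      (hf.comp measurable_hermitianEquiv), ← lintegral_indicator measurableSet_Ioi]
  refine lintegral_congr fun u => ?_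
  obtain hu | hu := lt_or_ge 0 u
  · have hN : (N : ℝ) ≠ 0 := NeZero.ne _
    have hu' : 0 < u / N ^ 2 := by positivity
    rw [Set.indicator_of_mem (Set.mem_Ioi.2 hu), (hν _ hu').lintegral_eq hf,
      div_mul_cancel₀ _ (pow_ne_zero 2 hN)]
    simp [sq]
  · simp [Set.indicator_of_notMem (Set.notMem_Ioi.2 hu), chiSqPDFscaled_of_nonpos _ hs hu]

theorem correlationMeasure_gue_apply [NeZero N] {ν : ℝ → Measure (HermMat N)}
    (hν : ∀ s, 0 < s → IsHSE s (ν s)) (hs : 0 < s) {B : Set (Fin n → ℝ)} (hB : MeasurableSet B) :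
    correlationMeasure n (gue N s) B = ∫⁻ u in Set.Ioi 0,
      ENNReal.ofReal (chiSqPDFscaled (N ^ 2) s u) * correlationMeasure n (ν (u / N ^ 2)) B := by
  have hmeas (σ : Fin n ↪ Fin N) :
      Measurable ({A : HermMat N | eig A ∘ σ ∈ B}.indicator (1 : HermMat N → ENNReal)) :=
    measurable_one.indicator (measurable_eig_comp σ hB)
  have lintegral_count (μ : Measure (HermMat N)) : correlationMeasure n μ B =
      ∫⁻ A, ∑ σ : Fin n ↪ Fin N, {A | eig A ∘ σ ∈ B}.indicator 1 A ∂μ := by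
    rw [correlationMeasure_apply μ hB, lintegral_finsetSum _ fun σ _ => hmeas σ]
    exact Finset.sum_congr rfl fun σ _ =>
      (lintegral_indicator_one (measurable_eig_comp σ hB)).symm
  simp only [lintegral_count]
  exact lintegral_gue_eq_lintegral_hse hν hs (Finset.measurable_sum _ fun σ _ => hmeas σ)

end SphereMixture

section AnalyticContinuation

open ProbabilityTheory

variable {Ω : Type*} [MeasurableSpace Ω] {X : Ω → ℝ} {μ : Measure Ω}

lemma mgf_eq_of_lintegral_eq_ofReal (hX : AEMeasurable X μ) {t r : ℝ} (hr : 0 ≤ r)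
    (h : ∫⁻ ω, ENNReal.ofReal (exp (t * X ω)) ∂μ = ENNReal.ofReal r) :
    t ∈ integrableExpSet X μ ∧ mgf X μ t = r := by
  have hmeas : AEStronglyMeasurable (fun ω => exp (t * X ω)) μ := by fun_prop
  have hnonneg : ∀ᵐ ω ∂μ, 0 ≤ exp (t * X ω) := .of_forall fun ω => (exp_pos _).le
  refine ⟨⟨hmeas, ?_⟩, ?_⟩
  · rw [hasFiniteIntegral_iff_ofReal hnonneg, h]
    exact ENNReal.ofReal_lt_top
  · rw [mgf, integral_eq_lintegral_of_nonneg_ae hnonneg hmeas, h, ENNReal.toReal_ofReal hr]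

lemma Iio_subset_interior_integrableExpSet {a : ℝ}
    (h : ∀ t : ℚ, t < a → (t : ℝ) ∈ integrableExpSet X μ) :
    Set.Iio a ⊆ interior (integrableExpSet X μ) := by
  intro t (ht : t < a)
  obtain ⟨r, -, hrt⟩ := exists_rat_btwn (sub_one_lt t)
  obtain ⟨r', htr', hr'⟩ := exists_rat_btwn ht
  exact mem_interior.2 ⟨Set.Ioo r r', Set.Ioo_subset_Icc_self.trans
    (convex_integrableExpSet.ordConnected.out (h r (hrt.trans ht)) (h r' hr')), isOpen_Ioo,
    hrt, htr'⟩

lemma frequently_nhdsNE_ofReal_ratCast (t : ℝ) {p : ℂ → Prop}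
    (h : ∀ᶠ x : ℝ in nhds t, x ∈ Set.range ((↑) : ℚ → ℝ) → p x) :
    ∃ᶠ z in nhdsWithin (t : ℂ) {(t : ℂ)}ᶜ, p z := by
  have frequently_rat : ∃ᶠ x in nhdsWithin t {t}ᶜ, x ∈ Set.range ((↑) : ℚ → ℝ) :=
    mem_closure_ne_iff_frequently_within.1 (Rat.denseRange_cast.sdiff_singleton t t)
  have tendsto_ofReal : Filter.Tendsto Complex.ofReal (nhdsWithin t {t}ᶜ)
      (nhdsWithin (t : ℂ) {(t : ℂ)}ᶜ) :=
    Complex.continuous_ofReal.continuousWithinAt.tendsto_nhdsWithin fun x hx =>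
      Complex.ofReal_injective.ne hx
  exact tendsto_ofReal.frequently
    ((frequently_rat.and_eventually (h.filter_mono nhdsWithin_le_nhds)).mono fun x hx => hx.2 hx.1)

theorem complexMGF_eqOn_of_eq_ratCast {a : ℝ} {F : ℂ → ℂ}
    (hF : DifferentiableOn ℂ F {z | z.re < a})
    (hint : ∀ t : ℚ, t < a → (t : ℝ) ∈ integrableExpSet X μ)
    (h : ∀ t : ℚ, t < a → (mgf X μ t : ℂ) = F (t : ℝ)) :
    Set.EqOn (complexMGF X μ) F {z | z.re < a} := by
  have isOpen : IsOpen {z : ℂ | z.re < a} := isOpen_lt Complex.continuous_re continuous_const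
  have differentiableOn : DifferentiableOn ℂ (complexMGF X μ) {z | z.re < a} :=
    differentiableOn_complexMGF.mono fun _ hz => Iio_subset_interior_integrableExpSet hint hz
  refine (differentiableOn.analyticOnNhd isOpen).eqOn_of_preconnected_of_frequently_eq
    (hF.analyticOnNhd isOpen) (convex_halfSpace_re_lt a).isPreconnected
    (z₀ := ((a - 1 : ℝ) : ℂ)) (by simp) (frequently_nhdsNE_ofReal_ratCast _ ?_)
  filter_upwards [Iio_mem_nhds (sub_one_lt a)] with x hx
  rintro ⟨t, rfl⟩
  rw [complexMGF_ofReal, h t hx]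

theorem integral_cexp_mul_eq_of_lintegral_exp_mul_ratCast {ρ : Measure ℝ} {g : ℝ → ℝ}
    (hg : Measurable g) (hg_nonneg : ∀ᵐ v ∂ρ, 0 ≤ g v) {a : ℝ} {F : ℂ → ℂ} {r : ℝ → ℝ}
    (hF : DifferentiableOn ℂ F {z | z.re < a}) (hFr : ∀ t : ℝ, t < a → F t = r t)
    (hr : ∀ t < a, 0 ≤ r t)
    (h : ∀ t : ℚ, t < a →
      ∫⁻ v, ENNReal.ofReal (exp (t * v)) * ENNReal.ofReal (g v) ∂ρ = ENNReal.ofReal (r t))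
    {z : ℂ} (hz : z.re < a) :
    ∫ v : ℝ, Complex.exp (z * v) * g v ∂ρ = F z := by
  have mgf_eq (t : ℚ) (ht : t < a) :
      (t : ℝ) ∈ integrableExpSet id (ρ.withDensity fun v => ENNReal.ofReal (g v)) ∧
        mgf id (ρ.withDensity fun v => ENNReal.ofReal (g v)) t = r t := by
    refine mgf_eq_of_lintegral_eq_ofReal aemeasurable_id (hr t ht) ?_
    rw [← h t ht, lintegral_withDensity_eq_lintegral_mul _ hg.ennreal_ofReal (by fun_prop)]
    exact lintegral_congr fun v => mul_comm (ENNReal.ofReal (g v)) _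
  rw [← complexMGF_eqOn_of_eq_ratCast hF (fun t ht => (mgf_eq t ht).1)
      (fun t ht => by rw [(mgf_eq t ht).2, hFr t ht]) hz, complexMGF,
    integral_withDensity_eq_integral_toReal_smul hg.ennreal_ofReal
      (.of_forall fun _ => ENNReal.ofReal_lt_top)]
  refine integral_congr_ae ?_
  filter_upwards [hg_nonneg] with v hv
  rw [ENNReal.toReal_ofReal hv, Complex.real_smul, mul_comm, id]

end AnalyticContinuation

section ExponentialTilt

variable {N n : ℕ} {t : ℝ}

lemma chiSqPDFscaled_of_pos (m : ℕ) {s u : ℝ} (hs : 0 < s) (hu : 0 < u) :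
    chiSqPDFscaled m s u = (2 ^ ((m : ℝ) / 2) * Gamma ((m : ℝ) / 2))⁻¹ * s ^ (-(m : ℝ) / 2) *
      u ^ ((m : ℝ) / 2 - 1) * exp (-u / (2 * s)) := by
  rw [chiSqPDFscaled, chiSqPDF, if_pos (div_pos hu hs), div_rpow hu.le hs.le,
    rpow_sub_one hs.ne', neg_div _ (m : ℝ), rpow_neg hs.le, ← neg_div s, div_div, mul_comm s 2]
  field_simp

lemma chiSqPDFscaled_nonneg (m : ℕ) {s : ℝ} (hs : 0 < s) (u : ℝ) : 0 ≤ chiSqPDFscaled m s u := by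
  obtain hu | hu := lt_or_ge 0 u
  · rw [chiSqPDFscaled_of_pos m hs hu]
    positivity
  · rw [chiSqPDFscaled_of_nonpos m hs hu]

lemma exp_mul_chiSqPDFscaled (m : ℕ) {s s' : ℝ} (hs : 0 < s) (hs' : 0 < s') (u : ℝ) :
    exp ((s⁻¹ - s'⁻¹) / 2 * u) * chiSqPDFscaled m s u =
      (s / s') ^ (-(m : ℝ) / 2) * chiSqPDFscaled m s' u := by
  obtain hu | hu := lt_or_ge 0 u
  · have exp_add : exp ((s⁻¹ - s'⁻¹) / 2 * u) * exp (-u / (2 * s)) = exp (-u / (2 * s')) := by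
      rw [← exp_add]
      congr 1
      field_simp
      ring
    rw [chiSqPDFscaled_of_pos m hs hu, chiSqPDFscaled_of_pos m hs' hu, ← exp_add,
      div_rpow hs.le hs'.le]
    have := rpow_pos_of_pos hs' (-(m : ℝ) / 2)
    field_simp
  · rw [chiSqPDFscaled_of_nonpos m hs hu, chiSqPDFscaled_of_nonpos m hs' hu, mul_zero, mul_zero]

/-- The product `φ_{N²}(p) det K̃_N` of the Fourier transform identity with `ip` replaced by a
complex parameter `t`, which makes sense on the half-plane `re t < N / √2`. -/
def hseLaplace (N : ℕ) {n : ℕ} (x : Fin n → ℝ) (t : ℂ) : ℂ :=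
  Complex.exp (-t * N / √2) * (1 - t * √2 / N) ^ (-(N : ℂ) ^ 2 / 2) *
    kernelDet N x (1 / ((1 - t * √2 / N) * N))

lemma one_div_mem_slitPlane {z : ℂ} (hz : 0 < z.re) : 1 / z ∈ Complex.slitPlane := by
  have hz₀ : z ≠ 0 := fun h => hz.ne' (by rw [h, Complex.zero_re])
  left
  rw [one_div, Complex.inv_re]
  exact div_pos hz (Complex.normSq_pos.2 hz₀)

lemma differentiable_hermitePhi (k : ℕ) : Differentiable ℂ (hermitePhi k) := by
  have : Differentiable ℂ (hermiteH k) := Polynomial.differentiable_aeval _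
  unfold hermitePhi hermiteP
  fun_prop

lemma differentiable_kernelK {f g : ℂ → ℂ} (hf : Differentiable ℂ f) (hg : Differentiable ℂ g) :
    Differentiable ℂ fun z => kernelK N (f z) (g z) := by
  have (k : ℕ) := differentiable_hermitePhi k
  unfold kernelK
  fun_prop

lemma differentiableAt_kernelDet (x : Fin n → ℝ) {s : ℂ} (hs : s ∈ Complex.slitPlane) :
    DifferentiableAt ℂ (kernelDet N x) s := by
  have differentiable_rescaled (i j : Fin n) :
      Differentiable ℂ fun w : ℂ => w * kernelK N (x i * w) (x j * w) :=
    differentiable_id.mul (differentiable_kernelK (by fun_prop) (by fun_prop))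
  have differentiableAt_kernelKt (i j : Fin n) :
      DifferentiableAt ℂ (fun s => kernelKt N (x i) (x j) s) s :=
    (differentiable_rescaled i j _).comp s
      (differentiableAt_id.cpow (differentiableAt_const (-(1 : ℂ) / 2)) hs)
  unfold kernelDet
  simp only [Matrix.det_apply, Matrix.of_apply]
  fun_prop

variable [NeZero N]

lemma re_one_sub_mul_sqrt_two_div_pos {z : ℂ} (hz : z.re < N / √2) :
    0 < (1 - z * √2 / N).re := by
  have hN : (0 : ℝ) < N := Nat.cast_pos.2 (NeZero.pos N)
  rw [lt_div_iff₀ (by positivity)] at hz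
  have : z.re * √2 / N < 1 := (div_lt_one hN).2 hz
  simpa [mul_div_assoc] using this

lemma differentiableOn_hseLaplace (x : Fin n → ℝ) :
    DifferentiableOn ℂ (hseLaplace N x) {z | z.re < N / √2} := by
  intro z hz
  have hre : 0 < (1 - z * √2 / N).re := re_one_sub_mul_sqrt_two_div_pos hz
  have hscale : 0 < ((1 - z * √2 / N) * N).re := by
    rw [← Complex.ofReal_natCast, Complex.re_mul_ofReal]
    exact mul_pos hre (Nat.cast_pos.2 (NeZero.pos N))
  have hscale₀ : (1 - z * √2 / N) * N ≠ 0 := fun h => hscale.ne' (by rw [h, Complex.zero_re])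
  have differentiableAt_cpow :
      DifferentiableAt ℂ (fun z : ℂ => (1 - z * √2 / N) ^ (-(N : ℂ) ^ 2 / 2)) z :=
    DifferentiableAt.cpow (by fun_prop) (by fun_prop) (Or.inl hre)
  have differentiableAt_scale :
      DifferentiableAt ℂ (fun z : ℂ => 1 / ((1 - z * √2 / N) * N)) z := by
    fun_prop (disch := assumption)
  have differentiableAt_det :
      DifferentiableAt ℂ (fun z : ℂ => kernelDet N x (1 / ((1 - z * √2 / N) * N))) z :=
    DifferentiableAt.comp z (g := kernelDet N x)
      (differentiableAt_kernelDet x (one_div_mem_slitPlane hscale)) differentiableAt_scale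
  unfold hseLaplace
  exact DifferentiableAt.differentiableWithinAt (by fun_prop)

lemma one_sub_mul_sqrt_two_div_pos (ht : t < N / √2) : 0 < 1 - t * √2 / N := by
  simpa using re_one_sub_mul_sqrt_two_div_pos (z := t) ht

lemma hseLaplace_ofReal (ht : t < N / √2) (x : Fin n → ℝ) : hseLaplace N x t =
    ((exp (-t * N / √2) * (1 - t * √2 / N) ^ (-(N : ℝ) ^ 2 / 2) *
      gueDensity N (1 / ((1 - t * √2 / N) * N)) x : ℝ) : ℂ) := by
  have hpos := one_sub_mul_sqrt_two_div_pos ht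
  have hN : (0 : ℝ) < N := Nat.cast_pos.2 (NeZero.pos N)
  rw [Complex.ofReal_mul, ← kernelDet_ofReal (by positivity), Complex.ofReal_mul,
    Complex.ofReal_cpow hpos.le, hseLaplace]
  push_cast
  rfl

lemma exp_mul_chiSqPDFscaled_one_div (ht : t < N / √2) (v : ℝ) :
    exp (t * v) * chiSqPDFscaled (N ^ 2) (1 / N) (N + v * √2) =
      exp (-t * N / √2) * (1 - t * √2 / N) ^ (-(N : ℝ) ^ 2 / 2) *
        chiSqPDFscaled (N ^ 2) (1 / ((1 - t * √2 / N) * N)) (N + v * √2) := by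
  have hpos := one_sub_mul_sqrt_two_div_pos ht
  have hN : (0 : ℝ) < N := Nat.cast_pos.2 (NeZero.pos N)
  have hsq : √2 ^ 2 = (2 : ℝ) := sq_sqrt zero_le_two
  have exponent : t * v = -t * N / √2 +
      ((1 / (N : ℝ))⁻¹ - (1 / ((1 - t * √2 / N) * N))⁻¹) / 2 * (N + v * √2) := by
    field_simp
    linear_combination -(t * v * √2 + t * N) * hsq
  have ratio : 1 / (N : ℝ) / (1 / ((1 - t * √2 / N) * N)) = 1 - t * √2 / N := by field_simp
  rw [exponent, exp_add, mul_assoc, exp_mul_chiSqPDFscaled _ (by positivity) (by positivity),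
    ratio]
  push_cast
  ring

end ExponentialTilt

section LaplaceTransform

variable {N n : ℕ}

lemma ae_nonneg_of_corrMass_eq_setIntegral (hn : n ≤ N) {μ : Measure (HermMat N)}
    [IsProbabilityMeasure μ] {f : (Fin n → ℝ) → ℝ}
    (hf : ∀ B : Set (Fin n → ℝ), MeasurableSet B → corrMass n μ B = ∫ x in B, f x) :
    (∀ᵐ x, 0 ≤ f x) ∧
      correlationMeasure n μ = volume.withDensity fun x => ENNReal.ofReal (f x) := by
  have integrable : Integrable f := by
    refine of_not_not fun hf' => corrMass_univ_ne_zero hn μ ?_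
    rw [hf _ .univ, setIntegral_univ, integral_undef hf']
  have nonneg : ∀ᵐ x, 0 ≤ f x := by
    refine ae_nonneg_of_forall_setIntegral_nonneg integrable fun B hB _ => ?_
    rw [← hf B hB, corrMass_eq_real_correlationMeasure μ hB]
    exact measureReal_nonneg
  refine ⟨nonneg, Measure.ext fun B hB => ?_⟩
  rw [withDensity_apply _ hB, ← ofReal_corrMass μ hB, hf B hB,
    ofReal_integral_eq_lintegral_ofReal integrable.integrableOn (ae_restrict_of_ae nonneg)]

lemma lintegral_comp_add_mul {g : ℝ → ENNReal} {a : ℝ} (ha : 0 < a) (b : ℝ) :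
    ∫⁻ v, ENNReal.ofReal a * g (b + v * a) = ∫⁻ u, g u := by
  let e : ℝ ≃ᵐ ℝ := (MeasurableEquiv.mulRight₀ a ha.ne').trans (MeasurableEquiv.addLeft b)
  have map_volume : (volume : Measure ℝ).map e = ENNReal.ofReal a⁻¹ • volume := by
    rw [MeasurableEquiv.coe_trans, ← Measure.map_map (MeasurableEquiv.measurable _)
      (MeasurableEquiv.measurable _)]
    change ((volume : Measure ℝ).map (· * a)).map (b + ·) = _
    rw [Real.map_volume_mul_right ha.ne', Measure.map_smul, map_add_left_eq_self,
      abs_of_pos (inv_pos.2 ha)]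
  calc ∫⁻ v, ENNReal.ofReal a * g (b + v * a) = ENNReal.ofReal a * ∫⁻ v, g (e v) :=
        lintegral_const_mul' _ _ ENNReal.ofReal_ne_top
    _ = ∫⁻ u, g u := by
        rw [← lintegral_map_equiv, map_volume, lintegral_smul_measure, smul_eq_mul, ← mul_assoc,
          ← ENNReal.ofReal_mul ha.le, mul_inv_cancel₀ ha.ne', ENNReal.ofReal_one, one_mul]

/-- The density `q_{N²}(v; x)`, built from a family `R` of correlation densities. -/
def mixtureDensity (N : ℕ) {n : ℕ} (R : ℝ → (Fin n → ℝ) → ℝ) (v : ℝ) (x : Fin n → ℝ) : ℝ :=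
  if -(N : ℝ) / √2 < v then
    R (1 / N + v * √2 / (N : ℝ) ^ 2) x * √2 * chiSqPDFscaled (N ^ 2) (1 / N) ((N : ℝ) + v * √2)
  else 0

variable [NeZero N] {R : ℝ → (Fin n → ℝ) → ℝ}

lemma mixtureDensity_eq (v : ℝ) (x : Fin n → ℝ) : mixtureDensity N R v x =
    if 0 < N + v * √2 then
      √2 * chiSqPDFscaled (N ^ 2) (1 / N) (N + v * √2) * R ((N + v * √2) / (N : ℝ) ^ 2) x
    else 0 := by
  have hN : (N : ℝ) ≠ 0 := NeZero.ne _
  have scale : 1 / N + v * √2 / (N : ℝ) ^ 2 = (N + v * √2) / (N : ℝ) ^ 2 := by field_simp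
  have range : -(N : ℝ) / √2 < v ↔ 0 < N + v * √2 := by
    rw [div_lt_iff₀ (by positivity), neg_lt_iff_pos_add']
  rw [mixtureDensity, scale]
  simp only [range]
  refine ite_congr rfl (fun _ => by ring) fun _ => rfl

lemma measurable_mixtureDensity
    (hRmeas : Measurable fun q : {p : ℝ × (Fin n → ℝ) // 0 < p.1} => R q.1.1 q.1.2) :
    Measurable fun p : ℝ × (Fin n → ℝ) => mixtureDensity N R p.1 p.2 := by
  classical
  have hN : (0 : ℝ) < N := Nat.cast_pos.2 (NeZero.pos N)
  have measurable_weight := measurable_chiSqPDFscaled (N ^ 2) (1 / N)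
  have measurable_scaled : Measurable fun p : {p : ℝ × (Fin n → ℝ) // 0 < N + p.1 * √2} =>
      R ((N + p.1.1 * √2) / (N : ℝ) ^ 2) p.1.2 :=
    hRmeas.comp (g := fun q : {p : ℝ × (Fin n → ℝ) // 0 < p.1} => R q.1.1 q.1.2)
      (f := fun p : {p : ℝ × (Fin n → ℝ) // 0 < N + p.1 * √2} =>
        ⟨((N + p.1.1 * √2) / (N : ℝ) ^ 2, p.1.2), div_pos p.2 (by positivity)⟩) (by fun_prop)
  have measurable_mul : Measurable fun p : {p : ℝ × (Fin n → ℝ) // 0 < N + p.1 * √2} =>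
      √2 * chiSqPDFscaled (N ^ 2) (1 / N) (N + p.1.1 * √2) *
        R ((N + p.1.1 * √2) / (N : ℝ) ^ 2) p.1.2 :=
    .mul (by fun_prop) measurable_scaled
  simp only [mixtureDensity_eq]
  exact Measurable.dite (s := {p : ℝ × (Fin n → ℝ) | 0 < N + p.1 * √2}) measurable_mul
    measurable_const (measurableSet_lt measurable_const (by fun_prop))

variable {ν : ℝ → Measure (HermMat N)}

lemma ae_ae_mixtureDensity_nonneg (hn : n ≤ N) (hν : ∀ s, 0 < s → IsHSE s (ν s))
    (hRmeas : Measurable fun q : {p : ℝ × (Fin n → ℝ) // 0 < p.1} => R q.1.1 q.1.2)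
    (hRdens : ∀ s, 0 < s → ∀ B : Set (Fin n → ℝ), MeasurableSet B →
      corrMass n (ν s) B = ∫ x in B, R s x) :
    ∀ᵐ x : Fin n → ℝ, ∀ᵐ v, 0 ≤ mixtureDensity N R v x := by
  rw [← Measure.ae_ae_comm (p := fun v x => 0 ≤ mixtureDensity N R v x)
    (measurableSet_le measurable_const (measurable_mixtureDensity hRmeas))]
  refine .of_forall fun v => ?_
  simp only [mixtureDensity_eq]
  split_ifs with hv
  · have hN : (0 : ℝ) < N := Nat.cast_pos.2 (NeZero.pos N)
    have hs : 0 < (N + v * √2) / (N : ℝ) ^ 2 := by positivity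
    have := (hν _ hs).1
    filter_upwards [(ae_nonneg_of_corrMass_eq_setIntegral hn (hRdens _ hs)).1] with x hx
    exact mul_nonneg (mul_nonneg (sqrt_nonneg 2) (chiSqPDFscaled_nonneg _ (by positivity) _)) hx
  · exact .of_forall fun _ => le_rfl

lemma setLIntegral_mixtureDensity (hn : n ≤ N) (hν : ∀ s, 0 < s → IsHSE s (ν s))
    (hRdens : ∀ s, 0 < s → ∀ B : Set (Fin n → ℝ), MeasurableSet B →
      corrMass n (ν s) B = ∫ x in B, R s x) {B : Set (Fin n → ℝ)} (hB : MeasurableSet B) (v : ℝ) :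
    ∫⁻ x in B, ENNReal.ofReal (mixtureDensity N R v x) =
      (Set.Ioi 0).indicator (fun u => ENNReal.ofReal (√2 * chiSqPDFscaled (N ^ 2) (1 / N) u) *
        correlationMeasure n (ν (u / N ^ 2)) B) (N + v * √2) := by
  have hN : (0 : ℝ) < N := Nat.cast_pos.2 (NeZero.pos N)
  simp only [mixtureDensity_eq]
  split_ifs with hv
  · have hs : 0 < (N + v * √2) / (N : ℝ) ^ 2 := by positivity
    have := (hν _ hs).1
    have weight_nonneg : 0 ≤ √2 * chiSqPDFscaled (N ^ 2) (1 / N) (N + v * √2) :=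
      mul_nonneg (sqrt_nonneg 2) (chiSqPDFscaled_nonneg _ (by positivity) _)
    simp only [ENNReal.ofReal_mul weight_nonneg]
    rw [lintegral_const_mul' _ _ ENNReal.ofReal_ne_top, Set.indicator_of_mem (Set.mem_Ioi.2 hv),
      (ae_nonneg_of_corrMass_eq_setIntegral hn (hRdens _ hs)).2, withDensity_apply _ hB]
  · simp [Set.indicator_of_notMem (Set.notMem_Ioi.2 (not_lt.1 hv))]

lemma lintegral_exp_mul_setLIntegral_mixtureDensity (hn : n ≤ N)
    (hν : ∀ s, 0 < s → IsHSE s (ν s))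
    (hRdens : ∀ s, 0 < s → ∀ B : Set (Fin n → ℝ), MeasurableSet B →
      corrMass n (ν s) B = ∫ x in B, R s x) {t : ℝ} (ht : t < N / √2) {B : Set (Fin n → ℝ)}
    (hB : MeasurableSet B) :
    ∫⁻ v, ENNReal.ofReal (exp (t * v)) * ∫⁻ x in B, ENNReal.ofReal (mixtureDensity N R v x) =
      ENNReal.ofReal (exp (-t * N / √2) * (1 - t * √2 / N) ^ (-(N : ℝ) ^ 2 / 2)) *
        correlationMeasure n (gue N (1 / ((1 - t * √2 / N) * N))) B := by
  have hN : (0 : ℝ) < N := Nat.cast_pos.2 (NeZero.pos N)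
  have hpos := one_sub_mul_sqrt_two_div_pos ht
  rw [correlationMeasure_gue_apply hν (by positivity) hB, ← lintegral_indicator measurableSet_Ioi,
    ← lintegral_comp_add_mul (g := (Set.Ioi 0).indicator _) (sqrt_pos.2 two_pos) N,
    ← lintegral_const_mul' _ _ ENNReal.ofReal_ne_top]
  refine lintegral_congr fun v => ?_
  rw [setLIntegral_mixtureDensity hn hν hRdens hB]
  obtain hv | hv := lt_or_ge 0 (N + v * √2)
  · rw [Set.indicator_of_mem (Set.mem_Ioi.2 hv), Set.indicator_of_mem (Set.mem_Ioi.2 hv)]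
    simp only [← mul_assoc]
    congr 1
    rw [← ENNReal.ofReal_mul (by positivity), ← ENNReal.ofReal_mul (by positivity),
      ← ENNReal.ofReal_mul (by positivity)]
    congr 1
    linear_combination √2 * exp_mul_chiSqPDFscaled_one_div ht v
  · simp [Set.indicator_of_notMem (Set.notMem_Ioi.2 hv)]

theorem ae_lintegral_exp_mul_mixtureDensity (hn : n ≤ N) (hν : ∀ s, 0 < s → IsHSE s (ν s))
    (hRmeas : Measurable fun q : {p : ℝ × (Fin n → ℝ) // 0 < p.1} => R q.1.1 q.1.2)
    (hRdens : ∀ s, 0 < s → ∀ B : Set (Fin n → ℝ), MeasurableSet B →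
      corrMass n (ν s) B = ∫ x in B, R s x) {t : ℝ} (ht : t < N / √2) :
    ∀ᵐ x : Fin n → ℝ,
      ∫⁻ v, ENNReal.ofReal (exp (t * v)) * ENNReal.ofReal (mixtureDensity N R v x) =
        ENNReal.ofReal (exp (-t * N / √2) * (1 - t * √2 / N) ^ (-(N : ℝ) ^ 2 / 2) *
          gueDensity N (1 / ((1 - t * √2 / N) * N)) x) := by
  have hN : (0 : ℝ) < N := Nat.cast_pos.2 (NeZero.pos N)
  have hpos := one_sub_mul_sqrt_two_div_pos ht
  have measurable_q := measurable_mixtureDensity (N := N) hRmeas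
  have measurable_density := measurable_gueDensity (N := N) (n := n)
    (s := 1 / ((1 - t * √2 / N) * N))
  have measurable_integrand : Measurable fun p : (Fin n → ℝ) × ℝ =>
      ENNReal.ofReal (exp (t * p.2)) * ENNReal.ofReal (mixtureDensity N R p.2 p.1) :=
    .mul (by fun_prop) (measurable_q.comp measurable_swap).ennreal_ofReal
  refine ae_eq_of_forall_setLIntegral_eq_of_sigmaFinite measurable_integrand.lintegral_prod_right'
    (by fun_prop) fun B hB _ => ?_
  rw [lintegral_lintegral_swap measurable_integrand.aemeasurable]
  have mgf_nonneg : 0 ≤ exp (-t * N / √2) * (1 - t * √2 / N) ^ (-(N : ℝ) ^ 2 / 2) := by positivity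
  simp only [ENNReal.ofReal_mul mgf_nonneg]
  rw [lintegral_const_mul' _ _ ENNReal.ofReal_ne_top, ← withDensity_apply _ hB,
    ← correlationMeasure_gue_eq_withDensity hn (by positivity),
    ← lintegral_exp_mul_setLIntegral_mixtureDensity hn hν hRdens ht hB]
  simp only [lintegral_const_mul' _ _ ENNReal.ofReal_ne_top]

theorem ae_integral_cexp_mul_mixtureDensity (hn : n ≤ N) (hν : ∀ s, 0 < s → IsHSE s (ν s))
    (hRmeas : Measurable fun q : {p : ℝ × (Fin n → ℝ) // 0 < p.1} => R q.1.1 q.1.2)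
    (hRdens : ∀ s, 0 < s → ∀ B : Set (Fin n → ℝ), MeasurableSet B →
      corrMass n (ν s) B = ∫ x in B, R s x) :
    ∀ᵐ x : Fin n → ℝ, ∀ z : ℂ, z.re < N / √2 →
      ∫ v : ℝ, Complex.exp (z * v) * mixtureDensity N R v x = hseLaplace N x z := by
  have lintegral_eq : ∀ᵐ x : Fin n → ℝ, ∀ t : ℚ, t < N / √2 → _ := ae_all_iff.2 fun t =>
    Filter.eventually_imp_distrib_left.2 fun ht =>
      ae_lintegral_exp_mul_mixtureDensity (t := t) hn hν hRmeas hRdens ht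
  filter_upwards [ae_ae_mixtureDensity_nonneg hn hν hRmeas hRdens, lintegral_eq]
    with x nonneg lintegral_eq z hz
  have measurable_q : Measurable fun v => mixtureDensity N R v x :=
    (measurable_mixtureDensity hRmeas).comp measurable_prodMk_right
  refine integral_cexp_mul_eq_of_lintegral_exp_mul_ratCast measurable_q nonneg
    (differentiableOn_hseLaplace x) (fun t ht => hseLaplace_ofReal ht x) (fun t ht => ?_)
    lintegral_eq hz
  have hpos := one_sub_mul_sqrt_two_div_pos ht
  exact mul_nonneg (by positivity) (gueDensity_nonneg x)

end LaplaceTransform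

theorem fourier_transform_identity
    (N n : ℕ) (hN : 1 ≤ N) (hn : 1 ≤ n) (hnN : n ≤ N)
    (ν : ℝ → Measure (HermMat N)) (hν : ∀ s : ℝ, 0 < s → IsHSE s (ν s))
    (R : ℝ → (Fin n → ℝ) → ℝ)
    (hRmeas : Measurable (fun q : {p : ℝ × (Fin n → ℝ) // 0 < p.1} => R q.1.1 q.1.2))
    (hRdens : ∀ s : ℝ, 0 < s → ∀ B : Set (Fin n → ℝ), MeasurableSet B →
      corrMass n (ν s) B = ∫ x in B, R s x)
    (q : ℝ → (Fin n → ℝ) → ℝ)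
    (hq : ∀ v : ℝ, ∀ x : Fin n → ℝ, q v x =
      if -(N : ℝ) / Real.sqrt 2 < v then
        R (1 / N + v * Real.sqrt 2 / (N : ℝ) ^ 2) x * Real.sqrt 2 *
          chiSqPDFscaled (N ^ 2) (1 / N) ((N : ℝ) + v * Real.sqrt 2)
      else 0) :
    ∀ᵐ x : Fin n → ℝ ∂(volume : Measure (Fin n → ℝ)), ∀ p : ℝ,
      (∫ v : ℝ, Complex.exp (Complex.I * p * v) * (q v x : ℂ)) =
        chiCharFun N p * Matrix.det (fun i j : Fin n =>
          kernelKt N (x i : ℂ) (x j : ℂ)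
            (1 / ((1 - Complex.I * p * Real.sqrt 2 / N) * N))) := by
  have : NeZero N := ⟨by lia⟩
  obtain rfl : q = mixtureDensity N R := funext₂ hq
  filter_upwards [ae_integral_cexp_mul_mixtureDensity hnN hν hRmeas hRdens] with x laplace_eq p
  have re_lt : (Complex.I * p).re < N / √2 := by
    have : (0 : ℝ) < N := Nat.cast_pos.2 hN
    rw [Complex.re_mul_ofReal, Complex.I_re, zero_mul]
    positivity
  rw [laplace_eq _ re_lt, hseLaplace, ← neg_mul, chiCharFun]
  rfl

end
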